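/- arXiv:1504.06832 — 5 statements merged into one kernel-verified Lean document; each statement's English description precedes it below -/
import Mathlib

section
/- For every pair of points a < b in the double q-lattice Λ and every integer n ≥ 1, one has b^n − a^n = (1 − q^n) · Σ_{c ∈ I(a,b)} |c| c^{n−1}, where the sum over the interval I(a,b) (which is an infinite set when a < 0 < b) converges absolutely. -/
open scoped BigOperators
open Classical

noncomputable section

/-- The double q-lattice Λ = {ζ₋ qᵐ} ∪ {ζ₊ qⁿ}. -/
def Lambda (q zm zp : ℝ) : Set ℝ :=
  {x | ∃ m : ℤ, x = zm * q ^ m} ∪ {x | ∃ n : ℤ, x = zp * q ^ n}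

/-- The interval I(a,b) of the double q-lattice: [a,b)∩Λ if a<b<0, [a,b]∩Λ if a<0<b,
(a,b]∩Λ if 0<a<b. -/
def qInterval (q zm zp a b : ℝ) : Set ℝ :=
  if b < 0 then Set.Ico a b ∩ Lambda q zm zp
  else if a < 0 then Set.Icc a b ∩ Lambda q zm zp
  else Set.Ioc a b ∩ Lambda q zm zp

lemma Lambda_ne_zero {q zm zp : ℝ} (hq0 : 0 < q) (hzm : zm < 0) (hzp : 0 < zp) {x : ℝ}
    (hx : x ∈ Lambda q zm zp) : x ≠ 0 := by
  rcases hx with ⟨m, rfl⟩ | ⟨m, rfl⟩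
  · exact mul_ne_zero hzm.ne (zpow_pos hq0 m).ne'
  · exact mul_ne_zero hzp.ne' (zpow_pos hq0 m).ne'

lemma ray_pos {q zm zp : ℝ} (hq0 : 0 < q) (hq1 : q < 1) (hzm : zm < 0) (hzp : 0 < zp) {x : ℝ}
    (hx : x ∈ Lambda q zm zp) (h0 : 0 < x) (c : ℝ) :
    c ∈ Set.range (fun i : ℕ => x * q ^ i) ↔ c ∈ Lambda q zm zp ∧ 0 < c ∧ c ≤ x := by
  rcases hx with ⟨m, rfl⟩ | ⟨m, rfl⟩
  · exact absurd h0 (not_lt.2 (mul_neg_of_neg_of_pos hzm (zpow_pos hq0 m)).le)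
  constructor
  · rintro ⟨i, rfl⟩
    refine ⟨Or.inr ⟨m + i, ?_⟩, by positivity, ?_⟩
    · simp only [zpow_add₀ hq0.ne', zpow_natCast]; ring
    · exact mul_le_of_le_one_right h0.le (pow_le_one₀ hq0.le hq1.le)
  · rintro ⟨⟨k, rfl⟩ | ⟨k, rfl⟩, hc, hcx⟩
    · exact absurd hc (not_lt.2 (mul_neg_of_neg_of_pos hzm (zpow_pos hq0 k)).le)
    · have h1 := le_of_mul_le_mul_left hcx hzp
      have h2 : m ≤ k := (zpow_le_zpow_iff_right_of_lt_one₀ hq0 hq1).1 h1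
      obtain ⟨i, rfl⟩ := Int.le.dest h2
      refine ⟨i, ?_⟩
      simp only [zpow_add₀ hq0.ne', zpow_natCast]; ring

lemma Lambda_neg {q zm zp x : ℝ} : -x ∈ Lambda q (-zp) (-zm) ↔ x ∈ Lambda q zm zp := by
  simp only [Lambda, Set.mem_union, Set.mem_ofPred_eq, neg_mul, neg_inj]
  exact or_comm

lemma ray_neg {q zm zp : ℝ} (hq0 : 0 < q) (hq1 : q < 1) (hzm : zm < 0) (hzp : 0 < zp) {x : ℝ}
    (hx : x ∈ Lambda q zm zp) (h0 : x < 0) (c : ℝ) :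
    c ∈ Set.range (fun i : ℕ => x * q ^ i) ↔ c ∈ Lambda q zm zp ∧ c < 0 ∧ x ≤ c := by
  have := ray_pos (zm := -zp) (zp := -zm) hq0 hq1 (by linarith) (by linarith)
    (Lambda_neg.2 hx) (by linarith) (-c)
  rw [Lambda_neg, neg_le_neg_iff, neg_pos] at this
  rw [← this]
  simp

lemma ray_hasSum {q : ℝ} (hq0 : 0 < q) (hq1 : q < 1) {x : ℝ} (h0 : x ≠ 0) (n : ℕ) (hn : 1 ≤ n) :
    HasSum ((Set.range (fun i : ℕ => x * q ^ i)).indicator (fun c : ℝ => |c| * c ^ (n - 1)))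
      (|x| * x ^ (n - 1) * (1 - q ^ n)⁻¹) := by
  have hinj : Function.Injective (fun i : ℕ => x * q ^ i) := by
    intro i j h
    exact pow_right_injective₀ hq0 hq1.ne (mul_left_cancel₀ h0 h)
  rw [← hasSum_subtype_iff_indicator]
  refine (Function.Injective.hasSum_range_iff (f := fun c : ℝ => |c| * c ^ (n - 1)) hinj).2 ?_
  have hg := (hasSum_geometric_of_lt_one (pow_nonneg hq0.le n)
    (pow_lt_one₀ hq0.le hq1 (by omega))).mul_left (|x| * x ^ (n - 1))
  refine (congrArg (fun F : ℕ → ℝ => HasSum F (|x| * x ^ (n - 1) * (1 - q ^ n)⁻¹)) ?_).mpr hg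
  funext i
  obtain ⟨k, rfl⟩ : ∃ k, n = k + 1 := ⟨n - 1, by omega⟩
  simp only [Function.comp, abs_mul, abs_of_pos (pow_pos hq0 i), Nat.add_sub_cancel]
  ring

/-- For a < b in Λ and n ≥ 1 one has
b^n − a^n = (1 − qⁿ) Σ_{c ∈ I(a,b)} |c| c^{n−1}, the sum converging absolutely. -/
theorem summation_lemma (q zm zp : ℝ) (hq0 : 0 < q) (hq1 : q < 1) (hzm : zm < 0)
    (hzp : 0 < zp) (a b : ℝ) (ha : a ∈ Lambda q zm zp) (hb : b ∈ Lambda q zm zp)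
    (hab : a < b) (n : ℕ) (hn : 1 ≤ n) :
    Summable (fun c : ↥(qInterval q zm zp a b) => |(c : ℝ)| * (c : ℝ) ^ (n - 1)) ∧
    b ^ n - a ^ n =
      (1 - q ^ n) * ∑' c : ↥(qInterval q zm zp a b), |(c : ℝ)| * (c : ℝ) ^ (n - 1) := by
  have hne := fun {x} => @Lambda_ne_zero q zm zp hq0 hzm hzp x
  have hd : (1 - q ^ n) ≠ 0 := (sub_pos.2 (pow_lt_one₀ hq0.le hq1 (by omega))).ne'
  have hA := ray_hasSum hq0 hq1 (hne ha) n hn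
  have hB := ray_hasSum hq0 hq1 (hne hb) n hn
  have hpow : ∀ x : ℝ, x * x ^ (n - 1) = x ^ n := fun x => mul_pow_sub_one (by omega) x
  suffices h : HasSum ((qInterval q zm zp a b).indicator (fun c : ℝ => |c| * c ^ (n - 1)))
      ((b ^ n - a ^ n) * (1 - q ^ n)⁻¹) by
    have h' := hasSum_subtype_iff_indicator.2 h
    refine ⟨h'.summable, ?_⟩
    have h2 := h'.tsum_eq
    simp only [Function.comp_def] at h2
    rw [h2]
    field_simp
  by_cases hb0 : b < 0
  · have ha0 : a < 0 := hab.trans hb0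
    have ra := ray_neg hq0 hq1 hzm hzp ha ha0
    have rb := ray_neg hq0 hq1 hzm hzp hb hb0
    convert hA.sub hB using 1
    · rfl
    · funext c
      simp only [Set.indicator_apply, ra, rb, qInterval, if_pos hb0, Set.mem_inter_iff, Set.mem_Ico]
      grind
    · rw [abs_of_neg ha0, abs_of_neg hb0, ← hpow a, ← hpow b]; ring
  · have hb0' : 0 < b := lt_of_le_of_ne (not_lt.1 hb0) (hne hb).symm
    have rb := ray_pos hq0 hq1 hzm hzp hb hb0'
    by_cases ha0 : a < 0
    · have ra := ray_neg hq0 hq1 hzm hzp ha ha0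
      convert hA.add hB using 1
      · funext c
        simp only [Set.indicator_apply, ra, rb, qInterval, if_neg hb0, if_pos ha0,
          Set.mem_inter_iff, Set.mem_Icc]
        have := @hne c
        grind
      · rw [abs_of_neg ha0, abs_of_pos hb0', ← hpow a, ← hpow b]; ring
    · have ha0' : 0 < a := lt_of_le_of_ne (not_lt.1 ha0) (hne ha).symm
      have ra := ray_pos hq0 hq1 hzm hzp ha ha0'
      convert hB.sub hA using 1
      · rfl
      · funext c
        simp only [Set.indicator_apply, ra, rb, qInterval, if_neg hb0, if_neg ha0,
          Set.mem_inter_iff, Set.mem_Ioc]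
        grind
      · rw [abs_of_pos ha0', abs_of_pos hb0', ← hpow a, ← hpow b]; ring

end
end

section
/- For every N ≥ 1 and every X = (x₁ < ⋯ < x_N) ∈ 𝔾_N the dimension Dim X is finite and equals ∏_{1≤i<j≤N}(x_j − x_i) / ((q;q)₁ (q;q)₂ ⋯ (q;q)_{N−1}); for N = 1 the empty products are interpreted as 1. -/
open scoped BigOperators ENNReal
open Classical

noncomputable section

/-- N-point configurations on the lattice. -/
def Conf (q zm zp : ℝ) (N : ℕ) : Type :=
  {x : Fin N → ℝ // StrictMono x ∧ ∀ i, x i ∈ Lambda q zm zp}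

/-- Interlacement Y ≺ X. -/
def Interlaces (q zm zp : ℝ) {N : ℕ} (Y : Conf q zm zp N) (X : Conf q zm zp (N+1)) : Prop :=
  ∀ i : Fin N, Y.1 i ∈ qInterval q zm zp (X.1 i.castSucc) (X.1 i.succ)

/-- Vandermonde-type product ∏_{i<j} (x_j - x_i). -/
def vprod {N : ℕ} (x : Fin N → ℝ) : ℝ :=
  ∏ p ∈ Finset.univ.filter (fun p : Fin N × Fin N => p.1 < p.2), (x p.2 - x p.1)

/-- finite q-Pochhammer symbol (a;q)_n, real version. -/
def qpochR (a q : ℝ) (n : ℕ) : ℝ := ∏ m ∈ Finset.range n, (1 - a * q ^ m)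

/-- The dimension Dim X, defined recursively: Dim X = 1 on 𝔾₁ and
Dim X = Σ_{Y ≺ X} ∏|yᵢ| · Dim Y (a possibly infinite sum of nonnegative terms,
so with values in [0,∞]). -/
def DimG (q zm zp : ℝ) : (N : ℕ) → Conf q zm zp N → ℝ≥0∞
  | 0, _ => 1
  | 1, _ => 1
  | (N+2), X =>
      ∑' Y : {Y : Conf q zm zp (N+1) // Interlaces q zm zp Y X},
        (∏ i, ENNReal.ofReal |Y.1.1 i|) * DimG q zm zp (N+1) Y.1

theorem aux_congr {α : Type*} {f g : α → ℝ} {a b : ℝ} (h : HasSum f a) (hf : g = f) (ha : b = a) :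
    HasSum g b := by
  rw [hf, ha]; exact h

theorem aux_pi_hasSum : ∀ (n : ℕ) (I : Fin n → Type) (f : ∀ i, I i → ℝ) (c : Fin n → ℝ),
    (∀ i, HasSum (f i) (c i)) →
    HasSum (fun y : ∀ i, I i => ∏ i, f i (y i)) (∏ i, c i) := by
  intro n
  induction n with
  | zero =>
    intro I f c _
    simp only [Finset.univ_eq_empty, Finset.prod_empty]
    exact hasSum_unique (fun _ : (∀ i, I i) => (1:ℝ))
  | succ n ih =>
    intro I f c h
    have h1 := ih (fun i => I i.succ) (fun i => f i.succ) (fun i => c i.succ) (fun i => h i.succ)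
    have h0 := h 0
    have hs := summable_mul_of_summable_norm h0.summable.norm h1.summable.norm
    have hm := h0.mul h1 hs
    rw [← (Fin.consEquiv I).hasSum_iff, Fin.prod_univ_succ]
    refine aux_congr hm ?_ rfl
    funext y
    simp [Fin.prod_univ_succ, Fin.consEquiv]

theorem aux_vprod {N : ℕ} (x : Fin N → ℝ) : vprod x = (Matrix.vandermonde x).det := by
  rw [Matrix.det_vandermonde, vprod, Finset.prod_filter, ← Finset.univ_product_univ,
    Finset.prod_product]
  refine Finset.prod_congr rfl fun i _ => ?_
  rw [← Finset.prod_filter]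
  refine Finset.prod_congr ?_ fun _ _ => rfl
  ext j; simp

theorem aux_vand {n : ℕ} (x : Fin (n+1) → ℝ) :
    (Matrix.of fun i j : Fin n => x i.succ ^ ((j:ℕ)+1) - x i.castSucc ^ ((j:ℕ)+1)).det
      = (Matrix.vandermonde x).det := by
  let B : Matrix (Fin (n+1)) (Fin (n+1)) ℝ :=
    Matrix.of fun i j => Fin.cases (x 0 ^ (j:ℕ))
      (fun i : Fin n => x i.succ ^ (j:ℕ) - x i.castSucc ^ (j:ℕ)) i
  have h : (Matrix.vandermonde x).det = B.det := by
    apply Matrix.det_eq_of_forall_row_eq_smul_add_pred (fun _ => 1)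
    · intro j; simp [B, Matrix.vandermonde_apply]
    · intro i j; simp [B, Matrix.vandermonde_apply]
  rw [h, Matrix.det_succ_column_zero, Fin.sum_univ_succ]
  simp only [B, Matrix.of_apply, Fin.cases_zero, Fin.cases_succ, Fin.val_zero, pow_zero, sub_self,
    mul_zero, zero_mul, Finset.sum_const_zero, add_zero, one_mul]
  congr 1

theorem aux_ne {q zm zp : ℝ} (hq0 : 0 < q) (hzm : zm < 0) (hzp : 0 < zp) {b : ℝ}
    (hb : b ∈ Lambda q zm zp) : b ≠ 0 := by
  rcases hb with ⟨m, rfl⟩ | ⟨m, rfl⟩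
  · exact mul_ne_zero hzm.ne (zpow_pos hq0 m).ne'
  · exact mul_ne_zero hzp.ne' (zpow_pos hq0 m).ne'

theorem aux_exp {q : ℝ} (hq0 : 0 < q) (hq1 : q < 1) {z : ℝ} (hz : 0 < z) {m k : ℤ}
    (h : z * q ^ k ≤ z * q ^ m) : ∃ n : ℕ, q ^ k = q ^ m * q ^ n := by
  have h1 : q ^ k ≤ q ^ m := le_of_mul_le_mul_left h hz
  have h2 : m ≤ k := (zpow_le_zpow_iff_right_of_lt_one₀ hq0 hq1).1 h1
  refine ⟨(k - m).toNat, ?_⟩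
  rw [← zpow_natCast, ← zpow_add₀ hq0.ne']
  congr 1
  omega

theorem aux_range {q zm zp : ℝ} (hq0 : 0 < q) (hq1 : q < 1) (hzm : zm < 0) (hzp : 0 < zp) {b : ℝ}
    (hb : b ∈ Lambda q zm zp) (y : ℝ) :
    y ∈ Set.range (fun n : ℕ => b * q ^ n) ↔
      y ∈ Lambda q zm zp ∧ ((0 < b ∧ 0 < y ∧ y ≤ b) ∨ (b < 0 ∧ y < 0 ∧ b ≤ y)) := by
  constructor
  · rintro ⟨n, rfl⟩
    have hp : 0 < q ^ n := pow_pos hq0 n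
    have hp1 : q ^ n ≤ 1 := pow_le_one₀ hq0.le hq1.le
    refine ⟨?_, ?_⟩
    · rcases hb with ⟨m, rfl⟩ | ⟨m, rfl⟩
      · left; exact ⟨m + n, by rw [zpow_add₀ hq0.ne', zpow_natCast]; ring⟩
      · right; exact ⟨m + n, by rw [zpow_add₀ hq0.ne', zpow_natCast]; ring⟩
    · rcases lt_or_gt_of_ne (aux_ne hq0 hzm hzp hb) with h | h
      · right; exact ⟨h, mul_neg_of_neg_of_pos h hp, by nlinarith⟩
      · left; exact ⟨h, mul_pos h hp, by nlinarith⟩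
  · rintro ⟨hy, h⟩
    rcases hb with ⟨m, rfl⟩ | ⟨m, rfl⟩ <;> rcases hy with ⟨k, rfl⟩ | ⟨k, rfl⟩ <;>
      have hm := zpow_pos hq0 m <;> have hk := zpow_pos hq0 k
    · have h1 : zm * q ^ m ≤ zm * q ^ k := by
        rcases h with h | h
        · exact absurd h.1 (by nlinarith)
        · exact h.2.2
      obtain ⟨n, hn⟩ := aux_exp hq0 hq1 (z := -zm) (by linarith) (m := m) (k := k) (by linarith)
      exact ⟨n, by simp only [hn]; ring⟩
    · exfalso
      rcases h with h | h
      · nlinarith [h.1]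
      · nlinarith [h.2.1]
    · exfalso
      rcases h with h | h
      · nlinarith [h.2.1]
      · nlinarith [h.1]
    · have h1 : zp * q ^ k ≤ zp * q ^ m := by
        rcases h with h | h
        · exact h.2.2
        · exact absurd h.1 (by nlinarith)
      obtain ⟨n, hn⟩ := aux_exp hq0 hq1 hzp h1
      exact ⟨n, by simp only [hn]; ring⟩

theorem aux_hasSum_range {q : ℝ} (hq0 : 0 < q) (hq1 : q < 1) {b : ℝ} (hb : b ≠ 0) (j : ℕ) :
    HasSum ((Set.range (fun n : ℕ => b * q ^ n)).indicator (fun y : ℝ => |y| * y ^ j))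
      (|b| * b ^ j / (1 - q ^ (j+1))) := by
  rw [← hasSum_subtype_iff_indicator]
  have hinj : Function.Injective (fun n : ℕ => b * q ^ n) := by
    intro m n h
    exact (pow_right_strictAnti₀ hq0 hq1).injective (mul_left_cancel₀ hb h)
  rw [← (Equiv.ofInjective _ hinj).hasSum_iff]
  have hg := (hasSum_geometric_of_lt_one (r := q ^ (j+1)) (by positivity)
    (pow_lt_one₀ hq0.le hq1 (by omega))).mul_left (|b| * b ^ j)
  rw [div_eq_mul_inv]
  refine aux_congr hg ?_ rfl
  funext n
  simp only [Function.comp, Equiv.ofInjective_apply]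
  rw [abs_mul, abs_of_pos (pow_pos hq0 n)]
  ring

theorem aux_hasSum_interval {q zm zp : ℝ} (hq0 : 0 < q) (hq1 : q < 1) (hzm : zm < 0) (hzp : 0 < zp)
    {a b : ℝ} (ha : a ∈ Lambda q zm zp) (hb : b ∈ Lambda q zm zp) (hab : a < b) (j : ℕ) :
    HasSum (fun y : qInterval q zm zp a b => |(y:ℝ)| * (y:ℝ) ^ j)
      ((b ^ (j+1) - a ^ (j+1)) / (1 - q ^ (j+1))) := by
  have ha0 := aux_ne hq0 hzm hzp ha
  have hb0 := aux_ne hq0 hzm hzp hb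
  have hA := aux_hasSum_range hq0 hq1 ha0 j
  have hB := aux_hasSum_range hq0 hq1 hb0 j
  have rA := aux_range hq0 hq1 hzm hzp ha
  have rB := aux_range hq0 hq1 hzm hzp hb
  have key : HasSum ((qInterval q zm zp a b).indicator (fun y : ℝ => |y| * y ^ j))
      ((b ^ (j+1) - a ^ (j+1)) / (1 - q ^ (j+1))) := by
    by_cases h1 : b < 0
    · have h := hA.sub hB
      rw [abs_of_neg h1, abs_of_neg (hab.trans h1)] at h
      refine aux_congr h ?_ ?_
      · funext y
        simp only [Set.indicator_apply, rA, rB, qInterval, h1, if_true, Set.mem_inter_iff,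
          Set.mem_Ico]
        by_cases hy : y ∈ Lambda q zm zp
        · have := aux_ne hq0 hzm hzp hy
          split_ifs <;> grind
        · simp [hy]
      · ring
    · have hbp : 0 < b := lt_of_le_of_ne (not_lt.1 h1) hb0.symm
      by_cases h2 : a < 0
      · have h := hA.add hB
        rw [abs_of_pos hbp, abs_of_neg h2] at h
        refine aux_congr h ?_ ?_
        · funext y
          simp only [Set.indicator_apply, rA, rB, qInterval, h1, h2, if_true, if_false,
            Set.mem_inter_iff, Set.mem_Icc]
          by_cases hy : y ∈ Lambda q zm zp
          · have := aux_ne hq0 hzm hzp hy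
            split_ifs <;> grind
          · simp [hy]
        · ring
      · have hap : 0 < a := lt_of_le_of_ne (not_lt.1 h2) ha0.symm
        have h := hB.sub hA
        rw [abs_of_pos hbp, abs_of_pos hap] at h
        refine aux_congr h ?_ ?_
        · funext y
          simp only [Set.indicator_apply, rA, rB, qInterval, h1, h2, if_false,
            Set.mem_inter_iff, Set.mem_Ioc]
          by_cases hy : y ∈ Lambda q zm zp
          · have := aux_ne hq0 hzm hzp hy
            split_ifs <;> grind
          · simp [hy]
        · ring
  exact (hasSum_subtype_iff_indicator (f := fun y : ℝ => |y| * y ^ j)).2 key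

theorem aux_mem {q zm zp a b y : ℝ} (h : y ∈ qInterval q zm zp a b) :
    y ∈ Lambda q zm zp ∧ a ≤ y ∧ y ≤ b ∧ (b < 0 → y < b) ∧ (0 ≤ a → a < b → a < y) := by
  unfold qInterval at h
  split_ifs at h with h1 h2
  · exact ⟨h.2, h.1.1, h.1.2.le, fun _ => h.1.2, fun _ _ => by linarith⟩
  · exact ⟨h.2, h.1.1, h.1.2, fun _ => by linarith, fun _ _ => by linarith⟩
  · exact ⟨h.2, h.1.1.le, h.1.2, fun _ => by linarith, fun _ _ => h.1.1⟩

/-- Interlacing configurations form a product of intervals. -/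
def auxEquiv {q zm zp : ℝ} {N : ℕ} (X : Conf q zm zp (N+2)) :
    {Y : Conf q zm zp (N+1) // Interlaces q zm zp Y X} ≃
      (∀ i : Fin (N+1), qInterval q zm zp (X.1 i.castSucc) (X.1 i.succ)) where
  toFun Y i := ⟨Y.1.1 i, Y.2 i⟩
  invFun y := ⟨⟨fun i => (y i : ℝ), by
    refine ⟨Fin.strictMono_iff_lt_succ.2 fun i => ?_, fun i => (aux_mem (y i).2).1⟩
    have h1 := aux_mem (y i.castSucc).2
    have h2 := aux_mem (y i.succ).2
    have hlt : X.1 i.succ.castSucc < X.1 i.succ.succ := X.2.1 (Fin.castSucc_lt_succ)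
    simp only [Fin.succ_castSucc] at h1
    rcases lt_or_ge (X.1 i.succ.castSucc) 0 with h | h
    · exact (h1.2.2.2.1 h).trans_le h2.2.1
    · exact h1.2.2.1.trans_lt (h2.2.2.2.2 h hlt)⟩, fun i => (y i).2⟩
  left_inv _ := rfl
  right_inv _ := rfl

theorem aux_sum {q zm zp : ℝ} (hq0 : 0 < q) (hq1 : q < 1) (hzm : zm < 0) (hzp : 0 < zp)
    {N : ℕ} (X : Conf q zm zp (N+2)) :
    HasSum (fun Y : {Y : Conf q zm zp (N+1) // Interlaces q zm zp Y X} =>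
      (∏ i, |Y.1.1 i|) * vprod Y.1.1) (vprod X.1 / qpochR q q (N+1)) := by
  have hlt : ∀ i : Fin (N+1), X.1 i.castSucc < X.1 i.succ := fun i => X.2.1 Fin.castSucc_lt_succ
  have hs := fun i j : Fin (N+1) => aux_hasSum_interval hq0 hq1 hzm hzp (X.2.2 i.castSucc)
    (X.2.2 i.succ) (hlt i) (j:ℕ)
  have hσ := fun σ : Equiv.Perm (Fin (N+1)) =>
    (aux_pi_hasSum (N+1) (fun i => qInterval q zm zp (X.1 i.castSucc) (X.1 i.succ))
      (fun i y => |(y:ℝ)| * (y:ℝ) ^ (σ i : ℕ)) _ (fun i => hs i (σ i))).mul_left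
        (((Equiv.Perm.sign σ : ℤ) : ℝ))
  have ht := hasSum_sum (s := Finset.univ) fun σ _ => hσ σ
  rw [← (auxEquiv X).hasSum_iff] at ht
  refine aux_congr ht ?_ ?_
  · funext Y
    have he : ∀ i, ((auxEquiv X Y i : ℝ)) = Y.1.1 i := fun _ => rfl
    simp only [Function.comp, he]
    rw [aux_vprod, ← Matrix.det_transpose, Matrix.det_apply', Finset.mul_sum]
    refine Finset.sum_congr rfl fun σ _ => ?_
    simp only [Matrix.transpose_apply, Matrix.vandermonde_apply, Finset.prod_mul_distrib]
    ring
  · rw [aux_vprod, ← aux_vand, ← Matrix.det_transpose, Matrix.det_apply', Finset.sum_div]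
    refine Finset.sum_congr rfl fun σ _ => ?_
    simp only [Matrix.transpose_apply, Matrix.of_apply, Finset.prod_div_distrib]
    rw [Equiv.prod_comp σ (fun j : Fin (N+1) => 1 - q ^ ((j:ℕ)+1)), mul_div_assoc]
    congr 2
    rw [qpochR, Finset.prod_range]
    refine Finset.prod_congr rfl fun i _ => ?_
    ring

theorem aux_qpoch_pos {q : ℝ} (hq0 : 0 < q) (hq1 : q < 1) (n : ℕ) : 0 < qpochR q q n := by
  refine Finset.prod_pos fun m _ => ?_
  have : q * q ^ m < 1 := by
    rw [← pow_succ']; exact pow_lt_one₀ hq0.le hq1 (by omega)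
  linarith

theorem aux_vprod_nonneg {N : ℕ} {x : Fin N → ℝ} (hx : StrictMono x) : 0 ≤ vprod x := by
  refine Finset.prod_nonneg fun p hp => ?_
  have := hx (Finset.mem_filter.1 hp).2
  linarith

theorem aux_main (q zm zp : ℝ) (hq0 : 0 < q) (hq1 : q < 1) (hzm : zm < 0)
    (hzp : 0 < zp) (N : ℕ) : ∀ X : Conf q zm zp (N+1),
    DimG q zm zp (N+1) X =
      ENNReal.ofReal (vprod X.1 / ∏ k ∈ Finset.range (N+1), qpochR q q k) := by
  induction N with
  | zero =>
    intro X
    have hv : vprod X.1 = 1 := by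
      rw [aux_vprod]; exact (Matrix.det_fin_one _).trans (by simp [Matrix.vandermonde_apply])
    rw [hv]
    simp [DimG, qpochR]
  | succ N ih =>
    intro X
    have hP : 0 < ∏ k ∈ Finset.range (N+1), qpochR q q k :=
      Finset.prod_pos fun k _ => aux_qpoch_pos hq0 hq1 k
    have h := (aux_sum hq0 hq1 hzm hzp X).div_const (∏ k ∈ Finset.range (N+1), qpochR q q k)
    rw [Finset.prod_range_succ, mul_comm, ← div_div, ← h.tsum_eq,
      ENNReal.ofReal_tsum_of_nonneg _ h.summable]
    · rw [DimG]
      refine tsum_congr fun Y => ?_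
      rw [ih, ← ENNReal.ofReal_prod_of_nonneg (fun _ _ => abs_nonneg _),
        ← ENNReal.ofReal_mul (Finset.prod_nonneg fun _ _ => abs_nonneg _), mul_div_assoc]
    · intro Y
      exact div_nonneg (mul_nonneg (Finset.prod_nonneg fun _ _ => abs_nonneg _)
        (aux_vprod_nonneg Y.1.2.1)) hP.le

/-- For every N ≥ 1 and X ∈ 𝔾_N, Dim X is finite and equals
∏_{i<j}(x_j − x_i) / ((q;q)₁ ⋯ (q;q)_{N−1}). -/
theorem dimension_formula (q zm zp : ℝ) (hq0 : 0 < q) (hq1 : q < 1) (hzm : zm < 0)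
    (hzp : 0 < zp) (N : ℕ) (hN : 1 ≤ N) (X : Conf q zm zp N) :
    DimG q zm zp N X ≠ ⊤ ∧
    DimG q zm zp N X =
      ENNReal.ofReal (vprod X.1 / ∏ k ∈ Finset.range N, qpochR q q k) := by
  obtain ⟨M, rfl⟩ : ∃ M, N = M + 1 := ⟨N - 1, by omega⟩
  have h := aux_main q zm zp hq0 hq1 hzm hzp M X
  exact ⟨by rw [h]; exact ENNReal.ofReal_ne_top, h⟩

end
end

section
/- Let N > K ≥ 1 and fix X ∈ 𝔾_N. Then for every partition ν ∈ 𝕐(K) one has Σ_{Y ∈ 𝔾_K} Λ^N_K(X,Y) · S̃_{ν|K}(Y) = S̃_{ν|N}(X), the series converging absolutely. -/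
open scoped BigOperators
open Classical

noncomputable section

def qlink (q zm zp : ℝ) (N : ℕ) (X : Conf q zm zp (N+1)) (Y : Conf q zm zp N) : ℝ :=
  if Interlaces q zm zp Y X then
    (∏ i, |Y.1 i|) * qpochR q q N * vprod Y.1 / vprod X.1
  else 0

/-- The multi-step link Λ^{K+d}_K, the composition of one-step q-links. -/
def linkPow (q zm zp : ℝ) (K : ℕ) : (d : ℕ) → Conf q zm zp (K + d) → Conf q zm zp K → ℝ
  | 0, X, Y => if X = Y then 1 else 0
  | (d+1), X, Y =>
      ∑' Z : Conf q zm zp (K + d), qlink q zm zp (K + d) X Z * linkPow q zm zp K d Z Y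

/-- The Schur Laurent polynomial S_{λ|N}(u) = det[u_j^{λ_i+N−i}] / ∏_{i<j}(u_i−u_j). -/
def schurL (N : ℕ) (l : Fin N → ℤ) (u : Fin N → ℝ) : ℝ :=
  (Matrix.of fun i j : Fin N => u j ^ (l i + (N : ℤ) - 1 - (i : ℕ))).det /
    ∏ p ∈ Finset.univ.filter (fun p : Fin N × Fin N => p.1 < p.2), (u p.1 - u p.2)

/-- Normalized Schur polynomial S̃_{ν|N}(y) = S_{ν|N}(y)/S_{ν|N}(1,q,…,q^{N−1}). -/
def schurTilde (q : ℝ) (N : ℕ) (l : Fin N → ℤ) (y : Fin N → ℝ) : ℝ :=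
  schurL N l y / schurL N l (fun i => q ^ (i : ℕ))

/-- A signature of length K padded by zeros to length N. -/
def padSig (K N : ℕ) (ν : Fin K → ℤ) : Fin N → ℤ :=
  fun i => if h : (i : ℕ) < K then ν ⟨i, h⟩ else 0



lemma hasSum_mul_real {α β : Type*} {f : α → ℝ} {g : β → ℝ} {s t : ℝ}
    (hf : HasSum f s) (hg : HasSum g t) :
    HasSum (fun p : α × β => f p.1 * g p.2) (s * t) :=
  hf.mul hg (summable_mul_of_summable_norm hf.summable.abs hg.summable.abs)

lemma hasSum_pi_prod : ∀ (N : ℕ) (h : Fin N → ℝ → ℝ) (s : Fin N → ℝ),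
    (∀ j, HasSum (h j) (s j)) →
    HasSum (fun y : Fin N → ℝ => ∏ j, h j (y j)) (∏ j, s j) := by
  intro N
  induction N with
  | zero =>
    intro h s _
    simp
  | succ N ih =>
    intro h s hs
    have h1 := ih (fun j => h j.succ) (fun j => s j.succ) (fun j => hs j.succ)
    have h2 := hasSum_mul_real (hs 0) h1
    rw [← (Fin.consEquiv (fun _ : Fin (N+1) => ℝ)).hasSum_iff, Fin.prod_univ_succ]
    convert h2 using 1
    funext p
    simp [Fin.prod_univ_succ, Fin.consEquiv]

lemma hasSum_det (N : ℕ) (h : Fin N → Fin N → ℝ → ℝ) (s : Fin N → Fin N → ℝ)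
    (hs : ∀ i j, HasSum (h i j) (s i j)) :
    HasSum (fun y : Fin N → ℝ => (Matrix.of fun i j => h i j (y j)).det)
      (Matrix.of fun i j => s i j).det := by
  simp only [Matrix.det_apply, Matrix.of_apply]
  refine hasSum_sum fun σ _ => ?_
  exact (hasSum_pi_prod N (fun j => h (σ j) j) (fun j => s (σ j) j)
    (fun j => hs (σ j) j)).const_smul _

lemma det_diff (N : ℕ) (x : Fin (N+1) → ℝ) (m : Fin N → ℕ) (m' : Fin (N+1) → ℕ)
    (h1 : ∀ i : Fin N, m' i.castSucc = m i + 1) (h2 : m' (Fin.last N) = 0) :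
    (Matrix.of fun i j : Fin (N+1) => x j ^ m' i).det =
      (-1) ^ N * (Matrix.of fun i j : Fin N =>
        x j.succ ^ (m i + 1) - x j.castSucc ^ (m i + 1)).det := by
  rw [Matrix.det_eq_of_forall_col_eq_smul_add_pred
    (B := Matrix.of fun i j : Fin (N+1) =>
      (Fin.cons (x 0 ^ m' i) (fun j : Fin N => x j.succ ^ m' i - x j.castSucc ^ m' i) :
        Fin (N+1) → ℝ) j) (fun _ => 1) (by intro i; simp) (by intro i j; simp)]
  rw [Matrix.det_succ_row _ (Fin.last N), Fin.sum_univ_succ]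
  rw [Finset.sum_eq_zero (by intro i _; simp [h2])]
  simp [h2, Matrix.submatrix, h1]

/-- The denominator of the Schur polynomial. -/
def pden (N : ℕ) (u : Fin N → ℝ) : ℝ :=
  ∏ p ∈ Finset.univ.filter (fun p : Fin N × Fin N => p.1 < p.2), (u p.1 - u p.2)

lemma prod_filter_lt (N : ℕ) (f : Fin N → Fin N → ℝ) :
    ∏ p ∈ Finset.univ.filter (fun p : Fin N × Fin N => p.1 < p.2), f p.1 p.2 =
      ∏ i, ∏ j ∈ Finset.Ioi i, f i j := by
  rw [Finset.prod_filter, Fintype.prod_prod_type]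
  refine Finset.prod_congr rfl fun i _ => ?_
  rw [← Finset.prod_filter]
  refine Finset.prod_congr ?_ fun _ _ => rfl
  ext j; simp

/-- The sign relating the two orders of the Vandermonde product. -/
def sg (N : ℕ) : ℝ :=
  ∏ p ∈ Finset.univ.filter (fun p : Fin N × Fin N => p.1 < p.2), (-1 : ℝ)

lemma sg_succ (N : ℕ) : sg (N+1) = (-1) ^ N * sg N := by
  unfold sg
  rw [prod_filter_lt (N+1) (fun _ _ => -1), prod_filter_lt N (fun _ _ => -1), Fin.prod_univ_succ,
    Fin.prod_Ioi_zero]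
  simp only [Fin.prod_Ioi_succ]
  simp

lemma sg_sq (N : ℕ) : sg N * sg N = 1 := by
  unfold sg; rw [← Finset.prod_mul_distrib]; simp

lemma pden_eq (N : ℕ) (u : Fin N → ℝ) : pden N u = sg N * vprod u := by
  unfold pden sg vprod
  rw [← Finset.prod_mul_distrib]
  exact Finset.prod_congr rfl fun _ _ => by ring

lemma vprod_pos (N : ℕ) (u : Fin N → ℝ) (h : StrictMono u) : 0 < vprod u := by
  unfold vprod
  refine Finset.prod_pos fun p hp => ?_
  have := h (Finset.mem_filter.1 hp).2
  linarith

lemma pden_det (N : ℕ) (u : Fin N → ℝ) (m : Fin N → ℕ) (hm : ∀ i, m i + i + 1 = N) :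
    (Matrix.of fun i j : Fin N => u j ^ m i).det = pden N u := by
  unfold pden
  rw [prod_filter_lt N (fun i j => u i - u j), ← Matrix.det_transpose]
  have := Matrix.det_projVandermonde (fun _ => (1:ℝ)) u
  simp only [one_mul] at this
  rw [← this]
  congr 1
  ext i j
  simp only [Matrix.transpose_apply, Matrix.of_apply, Matrix.projVandermonde_apply, one_pow,
    one_mul]
  congr 1
  have := hm j
  rw [Fin.val_rev]; omega

/-- Determinants at the principal specialization. -/
lemma det_principal (N : ℕ) (q : ℝ) (m : Fin N → ℕ) (m' : Fin (N+1) → ℕ)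
    (h1 : ∀ i : Fin N, m' i.castSucc = m i + 1) (h2 : m' (Fin.last N) = 0) :
    (Matrix.of fun i j : Fin (N+1) => (q ^ (j:ℕ)) ^ m' i).det =
      (∏ i, (1 - q ^ (m i + 1))) * (∏ j : Fin N, q ^ (j:ℕ)) *
      (Matrix.of fun i j : Fin N => (q ^ (j:ℕ)) ^ m i).det := by
  rw [det_diff N (fun j => q ^ (j:ℕ)) m m' h1 h2]
  have e : (Matrix.of fun i j : Fin N => (q ^ ((j.succ : Fin (N+1)):ℕ)) ^ (m i + 1) -
      (q ^ ((j.castSucc : Fin (N+1)):ℕ)) ^ (m i + 1)) =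
      Matrix.of (fun i j => (q ^ (m i + 1) - 1) *
        (Matrix.of (fun i j : Fin N => q ^ (j:ℕ) *
          (Matrix.of fun i j : Fin N => (q ^ (j:ℕ)) ^ m i) i j)) i j) := by
    ext i j
    simp only [Matrix.of_apply, Fin.val_succ, Fin.val_castSucc]
    ring
  rw [e, Matrix.det_mul_column, Matrix.det_mul_row]
  have : ∏ i, (1 - q ^ (m i + 1)) = (-1) ^ N * ∏ i, (q ^ (m i + 1) - 1) := by
    have : ((-1:ℝ)) ^ N = ∏ _i : Fin N, (-1:ℝ) := by simp
    rw [this, ← Finset.prod_mul_distrib]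
    refine Finset.prod_congr rfl fun p _ => by ring
  rw [this]; ring

lemma pden_principal (N : ℕ) (q : ℝ) :
    pden (N+1) (fun j => q ^ (j:ℕ)) =
      qpochR q q N * (∏ j : Fin N, q ^ (j:ℕ)) * pden N (fun j => q ^ (j:ℕ)) := by
  rw [← pden_det (N+1) _ (fun i => N - i) (by intro i; have := i.2; simp; omega),
    ← pden_det N _ (fun i => N - 1 - i) (by intro i; have := i.2; omega),
    det_principal N q (fun i => N - 1 - i) _ (by intro i; have := i.2; simp; omega) (by simp)]
  congr 2
  unfold qpochR
  rw [← Finset.prod_range_reflect, Finset.prod_range]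
  refine Finset.prod_congr rfl fun i _ => by rw [pow_succ]; ring

lemma hasSum_conv {α : Type*} {f g : α → ℝ} {s t : ℝ} (h : HasSum f s)
    (hf : ∀ x, g x = f x) (hs : t = s) : HasSum g t := by
  rw [hs, funext hf]; exact h

lemma geo_hasSum (q c : ℝ) (hq0 : 0 < q) (hq1 : q < 1) (hc : c ≠ 0) (m : ℕ) :
    HasSum (Set.indicator (Set.range fun k : ℕ => c * q ^ k) (fun y : ℝ => |y| * y ^ m))
      (|c| * c ^ m / (1 - q ^ (m + 1))) := by
  rw [← hasSum_subtype_iff_indicator]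
  have hinj : Function.Injective (fun k : ℕ => c * q ^ k) := by
    intro a b h
    have := mul_left_cancel₀ hc h
    exact (pow_right_strictAnti₀ hq0 hq1).injective this
  have := hinj.hasSum_range_iff (f := (fun y : ℝ => |y| * y ^ m))
    (a := (|c| * c ^ m / (1 - q ^ (m + 1))))
  refine this.2 ?_
  have hg := (hasSum_geometric_of_lt_one (r := q ^ (m+1)) (by positivity)
    (pow_lt_one₀ hq0.le hq1 (by omega))).mul_left (|c| * c ^ m)
  refine hasSum_conv hg (fun k => ?_) (div_eq_mul_inv _ _)
  simp only [Function.comp, abs_mul, abs_of_pos (pow_pos hq0 k)]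
  ring

lemma lam_pos (q zm zp y : ℝ) (hq0 : 0 < q) (hzm : zm < 0) (hy : y ∈ Lambda q zm zp)
    (h : 0 < y) : ∃ n : ℤ, y = zp * q ^ n := by
  rcases hy with ⟨m, rfl⟩ | h'
  · have := mul_neg_of_neg_of_pos hzm (zpow_pos hq0 m)
    linarith
  · exact h'

lemma lam_neg (q zm zp y : ℝ) (hq0 : 0 < q) (hzp : 0 < zp) (hy : y ∈ Lambda q zm zp)
    (h : y < 0) : ∃ n : ℤ, y = zm * q ^ n := by
  rcases hy with h' | ⟨m, rfl⟩
  · exact h'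
  · have := mul_pos hzp (zpow_pos hq0 m)
    linarith

lemma lam_ne (q zm zp y : ℝ) (hq0 : 0 < q) (hzm : zm < 0) (hzp : 0 < zp)
    (hy : y ∈ Lambda q zm zp) : y ≠ 0 := by
  rcases hy with ⟨m, rfl⟩ | ⟨m, rfl⟩
  · exact (mul_neg_of_neg_of_pos hzm (zpow_pos hq0 m)).ne
  · exact (mul_pos hzp (zpow_pos hq0 m)).ne'

lemma exists_nat_pow (q : ℝ) (hq0 : 0 < q) (hq1 : q < 1) (m n : ℤ) (h : q ^ m ≤ q ^ n) :
    ∃ k : ℕ, q ^ m = q ^ n * q ^ k := by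
  have : n ≤ m := (zpow_right_strictAnti₀ hq0 hq1).le_iff_ge.1 h
  obtain ⟨k, hk⟩ := Int.le.dest this
  exact ⟨k, by rw [← hk, zpow_add₀ hq0.ne', zpow_natCast]⟩

lemma range_pos (q zm zp b : ℝ) (hq0 : 0 < q) (hq1 : q < 1) (hzm : zm < 0) (hzp : 0 < zp)
    (hb : b ∈ Lambda q zm zp) (h : 0 < b) :
    (Set.range fun k : ℕ => b * q ^ k) = Set.Ioc 0 b ∩ Lambda q zm zp := by
  obtain ⟨n, rfl⟩ := lam_pos q zm zp b hq0 hzm hb h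
  ext y
  constructor
  · rintro ⟨k, rfl⟩
    have hk := pow_pos hq0 k
    have hk1 : q ^ k ≤ 1 := pow_le_one₀ hq0.le hq1.le
    refine ⟨⟨mul_pos h hk, mul_le_of_le_one_right h.le hk1⟩, Or.inr ⟨n + k, ?_⟩⟩
    rw [zpow_add₀ hq0.ne', zpow_natCast]; ring
  · rintro ⟨⟨h1, h2⟩, h3⟩
    obtain ⟨m, rfl⟩ := lam_pos q zm zp y hq0 hzm h3 h1
    obtain ⟨k, hk⟩ := exists_nat_pow q hq0 hq1 m n (le_of_mul_le_mul_left h2 hzp)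
    exact ⟨k, by simp only [hk, mul_assoc]⟩

lemma range_neg (q zm zp b : ℝ) (hq0 : 0 < q) (hq1 : q < 1) (hzm : zm < 0) (hzp : 0 < zp)
    (hb : b ∈ Lambda q zm zp) (h : b < 0) :
    (Set.range fun k : ℕ => b * q ^ k) = Set.Ico b 0 ∩ Lambda q zm zp := by
  obtain ⟨n, rfl⟩ := lam_neg q zm zp b hq0 hzp hb h
  ext y
  constructor
  · rintro ⟨k, rfl⟩
    have hk := pow_pos hq0 k
    have hk1 : q ^ k ≤ 1 := pow_le_one₀ hq0.le hq1.le
    refine ⟨⟨by simp only; nlinarith, mul_neg_of_neg_of_pos h hk⟩, Or.inl ⟨n + k, ?_⟩⟩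
    rw [zpow_add₀ hq0.ne', zpow_natCast]; ring
  · rintro ⟨⟨h1, h2⟩, h3⟩
    obtain ⟨m, rfl⟩ := lam_neg q zm zp y hq0 hzp h3 h2
    obtain ⟨k, hk⟩ := exists_nat_pow q hq0 hq1 m n ((mul_le_mul_left_of_neg hzm).1 h1)
    exact ⟨k, by simp only [hk, mul_assoc]⟩

lemma interval_hasSum (q zm zp a b : ℝ) (hq0 : 0 < q) (hq1 : q < 1) (hzm : zm < 0) (hzp : 0 < zp)
    (ha : a ∈ Lambda q zm zp) (hb : b ∈ Lambda q zm zp) (hab : a < b) (m : ℕ) :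
    HasSum (Set.indicator (qInterval q zm zp a b) (fun y : ℝ => |y| * y ^ m))
      ((b ^ (m+1) - a ^ (m+1)) / (1 - q ^ (m + 1))) := by
  have ha0 := lam_ne q zm zp a hq0 hzm hzp ha
  have hb0 := lam_ne q zm zp b hq0 hzm hzp hb
  have Ha := geo_hasSum q a hq0 hq1 ha0 m
  have Hb := geo_hasSum q b hq0 hq1 hb0 m
  unfold qInterval
  split_ifs with h1 h2
  · have h3 : a < 0 := hab.trans h1
    rw [range_neg q zm zp a hq0 hq1 hzm hzp ha h3] at Ha
    rw [range_neg q zm zp b hq0 hq1 hzm hzp hb h1] at Hb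
    refine hasSum_conv (Ha.sub Hb) (fun y => ?_) ?_
    · by_cases hy : y ∈ Lambda q zm zp
      · simp only [Set.indicator_apply, Set.mem_inter_iff, hy, and_true, Set.mem_Ico]
        split_ifs <;> grind
      · simp [hy]
    · rw [abs_of_neg h3, abs_of_neg h1]; ring
  · have h3 : 0 < b := lt_of_le_of_ne (not_lt.1 h1) hb0.symm
    rw [range_neg q zm zp a hq0 hq1 hzm hzp ha h2] at Ha
    rw [range_pos q zm zp b hq0 hq1 hzm hzp hb h3] at Hb
    refine hasSum_conv (Ha.add Hb) (fun y => ?_) ?_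
    · by_cases hy : y ∈ Lambda q zm zp
      · have := lam_ne q zm zp y hq0 hzm hzp hy
        simp only [Set.indicator_apply, Set.mem_inter_iff, hy, and_true, Set.mem_Ico,
          Set.mem_Icc, Set.mem_Ioc]
        split_ifs <;> grind
      · simp [hy]
    · rw [abs_of_neg h2, abs_of_pos h3]; ring
  · have h3 : 0 < a := lt_of_le_of_ne (not_lt.1 h2) ha0.symm
    have h4 := h3.trans hab
    rw [range_pos q zm zp a hq0 hq1 hzm hzp ha h3] at Ha
    rw [range_pos q zm zp b hq0 hq1 hzm hzp hb h4] at Hb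
    refine hasSum_conv (Hb.sub Ha) (fun y => ?_) ?_
    · by_cases hy : y ∈ Lambda q zm zp
      · simp only [Set.indicator_apply, Set.mem_inter_iff, hy, and_true, Set.mem_Ioc]
        split_ifs <;> grind
      · simp [hy]
    · rw [abs_of_pos h3, abs_of_pos h4]; ring

lemma conf_of_interlace (q zm zp : ℝ) (N : ℕ)
    (X : Conf q zm zp (N+1)) (y : Fin N → ℝ)
    (hy : ∀ i : Fin N, y i ∈ qInterval q zm zp (X.1 i.castSucc) (X.1 i.succ)) :
    StrictMono y ∧ ∀ i, y i ∈ Lambda q zm zp := by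
  constructor
  · cases N with
    | zero => intro i; exact i.elim0
    | succ N =>
      rw [Fin.strictMono_iff_lt_succ]
      intro i
      have h1 := hy i.castSucc
      have h2 := hy i.succ
      rw [Fin.succ_castSucc] at h1
      have e := X.2.1 (Fin.castSucc_lt_succ (i := i.castSucc))
      rw [Fin.succ_castSucc] at e
      have e2 := X.2.1 (Fin.castSucc_lt_succ (i := i.succ))
      unfold qInterval at h1 h2
      split_ifs at h1 h2 <;>
      simp only [Set.mem_inter_iff, Set.mem_Ioc, Set.mem_Ico, Set.mem_Icc] at h1 h2 <;>
      linarith [h1.1.1, h1.1.2, h2.1.1, h2.1.2]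
  · intro i
    have h1 := hy i
    unfold qInterval at h1
    split_ifs at h1 <;> exact h1.2

lemma interlace_bdd (q zm zp : ℝ) (N : ℕ) (M : ℝ)
    (X : Conf q zm zp (N+1)) (Y : Conf q zm zp N) (hI : Interlaces q zm zp Y X)
    (hM : ∀ i, |X.1 i| ≤ M) (i : Fin N) : |Y.1 i| ≤ M := by
  have h1 := hI i
  have a := abs_le.1 (hM i.castSucc)
  have b := abs_le.1 (hM i.succ)
  rw [abs_le]
  unfold qInterval at h1
  split_ifs at h1 <;> 
    exact ⟨by linarith [h1.1.1, h1.1.2], by linarith [h1.1.1, h1.1.2]⟩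

lemma exists_nat_exp (N : ℕ) (l : Fin N → ℤ) (hl : ∀ i, 0 ≤ l i) :
    ∃ m : Fin N → ℕ, ∀ i, l i + (N : ℤ) - 1 - (i : ℕ) = (m i : ℤ) := by
  refine ⟨fun i => (l i + (N : ℤ) - 1 - (i : ℕ)).toNat, fun i => ?_⟩
  have := hl i
  have := i.2
  exact (Int.toNat_of_nonneg (by omega)).symm

lemma schurL_nat (N : ℕ) (l : Fin N → ℤ) (m : Fin N → ℕ)
    (hm : ∀ i, l i + (N : ℤ) - 1 - (i : ℕ) = (m i : ℤ)) (u : Fin N → ℝ) :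
    schurL N l u = (Matrix.of fun i j : Fin N => u j ^ m i).det / pden N u := by
  unfold schurL pden
  simp only [hm, zpow_natCast]

lemma qpoch_pos (q : ℝ) (hq0 : 0 < q) (hq1 : q < 1) (N : ℕ) : 0 < qpochR q q N := by
  unfold qpochR
  refine Finset.prod_pos fun m _ => ?_
  have : q * q ^ m < 1 := by rw [← pow_succ']; exact pow_lt_one₀ hq0.le hq1 (by omega)
  linarith

/-- The one-step relation. -/
lemma one_step (q zm zp : ℝ) (hq0 : 0 < q) (hq1 : q < 1) (hzm : zm < 0) (hzp : 0 < zp)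
    (N : ℕ) (X : Conf q zm zp (N+1)) (l : Fin N → ℤ) (l' : Fin (N+1) → ℤ)
    (hl : ∀ i, 0 ≤ l i) (h1 : ∀ i : Fin N, l' i.castSucc = l i) (h2 : l' (Fin.last N) = 0) :
    HasSum (fun Y : Conf q zm zp N => qlink q zm zp N X Y * schurTilde q N l Y.1)
      (schurTilde q (N+1) l' X.1) := by
  obtain ⟨m, hm⟩ := exists_nat_exp N l hl
  obtain ⟨m', hm'⟩ := exists_nat_exp (N+1) l' (by
    intro i; refine Fin.lastCases ?_ ?_ i
    · rw [h2]
    · intro i; rw [h1]; exact hl i)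
  have e1 : ∀ i : Fin N, m' i.castSucc = m i + 1 := by
    intro i
    have a := hm i
    have b := hm' i.castSucc
    rw [h1] at b
    simp only [Fin.val_castSucc] at b
    push_cast at b
    omega
  have e2 : m' (Fin.last N) = 0 := by
    have b := hm' (Fin.last N)
    rw [h2] at b
    simp only [Fin.val_last] at b
    push_cast at b
    omega
  have hs := hasSum_det N
    (fun i j => Set.indicator (qInterval q zm zp (X.1 j.castSucc) (X.1 j.succ))
      (fun y : ℝ => |y| * y ^ m i))
    (fun i j => (X.1 j.succ ^ (m i+1) - X.1 j.castSucc ^ (m i+1)) / (1 - q ^ (m i + 1)))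
    (fun i j => interval_hasSum q zm zp _ _ hq0 hq1 hzm hzp (X.2.2 _) (X.2.2 _)
      (X.2.1 (Fin.castSucc_lt_succ (i := j))) (m i))
  have hsupp : Function.support (fun y : Fin N → ℝ => (Matrix.of fun i j =>
      Set.indicator (qInterval q zm zp (X.1 j.castSucc) (X.1 j.succ))
      (fun y : ℝ => |y| * y ^ m i) (y j)).det) ⊆
      {x : Fin N → ℝ | StrictMono x ∧ ∀ i, x i ∈ Lambda q zm zp} := by
    intro y hy
    refine conf_of_interlace q zm zp N X y fun j => ?_
    by_contra hj
    refine hy (Matrix.det_eq_zero_of_column_eq_zero j fun i => ?_)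
    simp [hj]
  have hs' : HasSum (fun Y : Conf q zm zp N => (Matrix.of fun i j =>
      Set.indicator (qInterval q zm zp (X.1 j.castSucc) (X.1 j.succ))
      (fun y : ℝ => |y| * y ^ m i) (Y.1 j)).det) _ := (hasSum_subtype_iff_of_support_subset hsupp).2 hs
  have hVX := vprod_pos _ _ X.2.1
  have hs'' := hs'.mul_left (qpochR q q N / (sg N * vprod X.1) / schurL N l (fun i => q ^ (i:ℕ)))
  have hsg : sg N ≠ 0 := fun h => by simpa [h] using sg_sq N
  have hqp := (qpoch_pos q hq0 hq1 N).ne'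
  have hprod : ∏ i, (1 - q ^ (m i + 1)) ≠ 0 := by
    refine Finset.prod_ne_zero_iff.2 fun i _ => ?_
    have : q ^ (m i + 1) < 1 := pow_lt_one₀ hq0.le hq1 (by omega)
    linarith
  refine hasSum_conv hs'' (fun Y => ?_) ?_
  · have hVY := vprod_pos _ _ Y.2.1
    by_cases hI : Interlaces q zm zp Y X
    · have : (Matrix.of fun i j => Set.indicator (qInterval q zm zp (X.1 j.castSucc) (X.1 j.succ))
          (fun y : ℝ => |y| * y ^ m i) (Y.1 j)).det =
          (∏ j, |Y.1 j|) * (Matrix.of fun i j : Fin N => Y.1 j ^ m i).det := by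
        rw [← Matrix.det_mul_row]
        congr 1
        ext i j
        simp only [Matrix.of_apply]
        rw [Set.indicator_of_mem (hI j)]
      rw [this]
      unfold qlink schurTilde
      rw [if_pos hI, schurL_nat N l m hm Y.1, pden_eq]
      field_simp
    · have : (Matrix.of fun i j => Set.indicator (qInterval q zm zp (X.1 j.castSucc) (X.1 j.succ))
          (fun y : ℝ => |y| * y ^ m i) (Y.1 j)).det = 0 := by
        unfold Interlaces at hI
        push Not at hI
        obtain ⟨j, hj⟩ := hI
        refine Matrix.det_eq_zero_of_column_eq_zero j fun i => ?_
        simp [hj]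
      rw [this]
      unfold qlink
      rw [if_neg hI]; ring
  · have e3 : (Matrix.of fun i j : Fin N =>
        (X.1 j.succ ^ (m i+1) - X.1 j.castSucc ^ (m i+1)) / (1 - q ^ (m i + 1))).det =
        (∏ i, (1 - q ^ (m i + 1)))⁻¹ * (Matrix.of fun i j : Fin N =>
          X.1 j.succ ^ (m i+1) - X.1 j.castSucc ^ (m i+1)).det := by
      rw [← Finset.prod_inv_distrib, ← Matrix.det_mul_column]
      congr 1
      ext i j
      simp only [Matrix.of_apply]
      rw [div_eq_mul_inv, mul_comm]
    rw [e3]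
    unfold schurTilde
    rw [schurL_nat _ l' m' hm', schurL_nat _ l' m' hm', schurL_nat _ l m hm,
      det_principal N q m m' e1 e2, pden_principal, det_diff N X.1 m m' e1 e2, pden_eq _ X.1, sg_succ]
    have hqj : (∏ j : Fin N, q ^ (j:ℕ)) ≠ 0 :=
      Finset.prod_ne_zero_iff.2 fun i _ => (pow_pos hq0 _).ne'
    generalize (Matrix.of fun i j : Fin N => (q ^ (j:ℕ)) ^ m i).det = D
    generalize (Matrix.of fun i j : Fin N =>
          X.1 j.succ ^ (m i+1) - X.1 j.castSucc ^ (m i+1)).det = E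
    generalize pden N (fun j => q ^ (j:ℕ)) = P
    have h1N : ((-1:ℝ)) ^ N ≠ 0 := by simp
    have := hVX.ne'
    by_cases hD : D = 0
    · simp [hD]
    by_cases hP : P = 0
    · simp [hP]
    field_simp

lemma pden_ne (N : ℕ) (u : Fin N → ℝ) (h : Function.Injective u) : pden N u ≠ 0 := by
  unfold pden
  refine Finset.prod_ne_zero_iff.2 fun p hp => ?_
  have := (Finset.mem_filter.1 hp).2
  exact sub_ne_zero.2 fun e => this.ne (h e)

lemma schurL_zero (N : ℕ) (u : Fin N → ℝ) (h : Function.Injective u) :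
    schurL N (fun _ => 0) u = 1 := by
  rw [schurL_nat N (fun _ => 0) (fun i => N - 1 - i) (by intro i; have := i.2; omega),
    pden_det N u _ (by intro i; have := i.2; omega)]
  exact div_self (pden_ne N u h)

lemma schurTilde_zero (q zm zp : ℝ) (hq0 : 0 < q) (hq1 : q < 1) (N : ℕ) (X : Conf q zm zp N) :
    schurTilde q N (fun _ => 0) X.1 = 1 := by
  unfold schurTilde
  rw [schurL_zero N _ X.2.1.injective, schurL_zero N, div_one]
  intro a b h
  exact Fin.ext ((pow_right_strictAnti₀ hq0 hq1).injective h)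

lemma qlink_nonneg (q zm zp : ℝ) (hq0 : 0 < q) (hq1 : q < 1) (N : ℕ) (X : Conf q zm zp (N+1))
    (Y : Conf q zm zp N) : 0 ≤ qlink q zm zp N X Y := by
  unfold qlink
  have h1 := vprod_pos _ _ X.2.1
  have h2 := vprod_pos _ _ Y.2.1
  have h3 := qpoch_pos q hq0 hq1 N
  have h4 : 0 ≤ ∏ i, |Y.1 i| := Finset.prod_nonneg fun i _ => abs_nonneg _
  split_ifs
  · positivity
  · exact le_rfl

lemma qlink_sum (q zm zp : ℝ) (hq0 : 0 < q) (hq1 : q < 1) (hzm : zm < 0) (hzp : 0 < zp)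
    (N : ℕ) (X : Conf q zm zp (N+1)) : HasSum (qlink q zm zp N X) 1 := by
  have := one_step q zm zp hq0 hq1 hzm hzp N X (fun _ => 0) (fun _ => 0) (fun _ => le_rfl)
    (fun _ => rfl) rfl
  simpa only [schurTilde_zero q zm zp hq0 hq1, mul_one] using this

lemma qlink_supp (q zm zp : ℝ) (N : ℕ) (M : ℝ) (X : Conf q zm zp (N+1)) (Y : Conf q zm zp N)
    (h : qlink q zm zp N X Y ≠ 0) (hM : ∀ i, |X.1 i| ≤ M) (i : Fin N) : |Y.1 i| ≤ M := by
  refine interlace_bdd q zm zp N M X Y ?_ hM i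
  by_contra hI
  exact h (by unfold qlink; rw [if_neg hI])

lemma schurL_shift (N : ℕ) (l : Fin N → ℤ) (hl : ∀ i, 0 ≤ l i) (c : ℕ) (u : Fin N → ℝ) :
    schurL N (fun i => l i + c) u = (∏ j, u j ^ c) * schurL N l u := by
  obtain ⟨m, hm⟩ := exists_nat_exp N l hl
  rw [schurL_nat N l m hm, schurL_nat N (fun i => l i + c) (fun i => m i + c)
    (by intro i; have := hm i; push_cast; omega), ← mul_div_assoc, ← Matrix.det_mul_row]
  congr 2
  ext i j
  simp only [Matrix.of_apply]
  ring

lemma schurTilde_bdd (q zm zp : ℝ) (hq0 : 0 < q) (hq1 : q < 1) (hzm : zm < 0) (hzp : 0 < zp)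
    (M : ℝ) : ∀ (N : ℕ) (l : Fin N → ℤ), Antitone l → (∀ i, 0 ≤ l i) →
    ∃ C : ℝ, ∀ X : Conf q zm zp N, (∀ i, |X.1 i| ≤ M) → |schurTilde q N l X.1| ≤ C := by
  intro N
  induction N with
  | zero =>
    intro l _ _
    refine ⟨|schurTilde q 0 l (fun i => i.elim0)|, fun X _ => ?_⟩
    rw [Subsingleton.elim X.1 (fun i => i.elim0)]
  | succ N ih =>
    intro l hmono hpos
    obtain ⟨c, hc⟩ := Int.eq_ofNat_of_zero_le (hpos (Fin.last N))
    have hl0 : ∀ i, 0 ≤ l i - c := fun i => by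
      have := hmono (Fin.le_last i)
      omega
    obtain ⟨C, hC⟩ := ih (fun i => l i.castSucc - c)
      (fun i j hij => by
        have := hmono (Fin.castSucc_le_castSucc_iff.2 hij)
        simp only; omega)
      (fun i => hl0 _)
    refine ⟨(∏ _j : Fin (N+1), |M| ^ c) / |∏ j : Fin (N+1), (q ^ (j:ℕ)) ^ c| * |C|,
      fun X hX => ?_⟩
    have e : schurTilde q (N+1) l X.1 = (∏ j, X.1 j ^ c) / (∏ j : Fin (N+1), (q ^ (j:ℕ)) ^ c) *
        schurTilde q (N+1) (fun i => l i - c) X.1 := by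
      unfold schurTilde
      have el : l = fun i => (l i - c) + c := by funext i; ring
      conv_lhs => rw [el]
      rw [schurL_shift _ _ hl0, schurL_shift _ _ hl0, mul_div_mul_comm]
    have hs := one_step q zm zp hq0 hq1 hzm hzp N X (fun i => l i.castSucc - c) (fun i => l i - c)
      (fun i => hl0 _) (fun i => rfl) (by omega)
    have hb : |schurTilde q (N+1) (fun i => l i - c) X.1| ≤ |C| := by
      have h1 := (qlink_sum q zm zp hq0 hq1 hzm hzp N X).mul_right |C|
      rw [one_mul] at h1
      rw [← Real.norm_eq_abs, ← hs.tsum_eq]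
      refine tsum_of_norm_bounded h1 fun Y => ?_
      rw [norm_mul, Real.norm_eq_abs, Real.norm_eq_abs,
        abs_of_nonneg (qlink_nonneg q zm zp hq0 hq1 N X Y)]
      by_cases h0 : qlink q zm zp N X Y = 0
      · simp [h0]
      · refine mul_le_mul_of_nonneg_left ?_ (qlink_nonneg q zm zp hq0 hq1 N X Y)
        exact (hC Y (qlink_supp q zm zp N M X Y h0 hX)).trans (le_abs_self C)
    rw [e, abs_mul, abs_div]
    refine mul_le_mul ?_ hb (abs_nonneg _) (by positivity)
    refine div_le_div_of_nonneg_right ?_ (abs_nonneg _)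
    rw [Finset.abs_prod]
    refine Finset.prod_le_prod (fun i _ => abs_nonneg _) fun i _ => ?_
    rw [abs_pow]
    exact pow_le_pow_left₀ (abs_nonneg _) ((hX i).trans (le_abs_self M)) c

lemma swap_sum {α β : Type*} (w : α → ℝ) (L : α → β → ℝ) (f : β → ℝ) (g : α → ℝ) (s C : ℝ)
    (hw : ∀ z, 0 ≤ w z) (hL : ∀ z y, 0 ≤ L z y) (hws : Summable w)
    (hL1 : ∀ z, HasSum (L z) 1) (hC : ∀ z y, w z * L z y ≠ 0 → |f y| ≤ C)
    (hg : ∀ z, HasSum (fun y => L z y * f y) (g z)) (hs : HasSum (fun z => w z * g z) s) :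
    HasSum (fun y => (∑' z, w z * L z y) * f y) s := by
  have hG : Summable (fun p : α × β => w p.1 * L p.1 p.2) := by
    have h0 : 0 ≤ (fun p : α × β => w p.1 * L p.1 p.2) :=
      fun p => mul_nonneg (hw p.1) (hL p.1 p.2)
    have h1 : ∀ z, HasSum (fun y => w z * L z y) (w z) := fun z =>
      hasSum_conv ((hL1 z).mul_left (w z)) (fun _ => rfl) (mul_one _).symm
    have h2 : Summable (fun z => ∑' y, w z * L z y) := by
      rw [funext fun z => (h1 z).tsum_eq]
      exact hws
    exact (summable_prod_of_nonneg h0).2 ⟨fun z => (h1 z).summable, h2⟩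
  have hF : Summable (fun p : α × β => w p.1 * (L p.1 p.2 * f p.2)) := by
    have hG' : Summable (fun p : α × β => C * (w p.1 * L p.1 p.2)) := hG.mul_left C
    refine Summable.of_norm_bounded hG' fun p => ?_
    rw [Real.norm_eq_abs, ← mul_assoc, abs_mul,
      abs_of_nonneg (mul_nonneg (hw _) (hL _ _)), mul_comm]
    by_cases h0 : w p.1 * L p.1 p.2 = 0
    · simp [h0]
    · exact mul_le_mul_of_nonneg_right (hC _ _ h0) (mul_nonneg (hw _) (hL _ _))
  obtain ⟨T, hT⟩ := hF
  have h1 : HasSum (fun z => w z * g z) T := hT.prod_fiberwise fun z => (hg z).mul_left (w z)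
  rw [hs.unique h1]
  have hT' := (Equiv.prodComm β α).hasSum_iff.2 hT
  refine hT'.prod_fiberwise fun y => ?_
  have hGy : Summable (fun z => w z * L z y) :=
    hG.comp_injective (i := fun z => (z, y)) (fun a b h => (Prod.mk.inj h).1)
  refine hasSum_conv (hGy.hasSum.mul_right (f y)) (fun z => ?_) rfl
  simp only [Function.comp, Equiv.prodComm_apply, Prod.swap]
  ring

lemma linkPow_nonneg (q zm zp : ℝ) (hq0 : 0 < q) (hq1 : q < 1) (K : ℕ) :
    ∀ (d : ℕ) (X : Conf q zm zp (K + d)) (Y : Conf q zm zp K), 0 ≤ linkPow q zm zp K d X Y := by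
  intro d
  induction d with
  | zero => intro X Y; unfold linkPow; split_ifs <;> norm_num
  | succ d ih =>
    intro X Y
    unfold linkPow
    exact tsum_nonneg fun Z => mul_nonneg (qlink_nonneg q zm zp hq0 hq1 _ X Z) (ih Z Y)

lemma linkPow_supp (q zm zp : ℝ) (K : ℕ) (M : ℝ) :
    ∀ (d : ℕ) (X : Conf q zm zp (K + d)) (Y : Conf q zm zp K), linkPow q zm zp K d X Y ≠ 0 →
      (∀ i, |X.1 i| ≤ M) → ∀ i, |Y.1 i| ≤ M := by
  intro d
  induction d with
  | zero =>
    intro X Y h hM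
    unfold linkPow at h
    have : X = Y := by by_contra hne; exact h (if_neg hne)
    rw [← this]; exact hM
  | succ d ih =>
    intro X Y h hM
    unfold linkPow at h
    have : ∃ Z, qlink q zm zp (K + d) X Z * linkPow q zm zp K d Z Y ≠ 0 := by
      by_contra hne
      push Not at hne
      exact h (by simp [hne])
    obtain ⟨Z, hZ⟩ := this
    exact ih Z Y (right_ne_zero_of_mul hZ)
      (qlink_supp q zm zp (K+d) M X Z (left_ne_zero_of_mul hZ) hM)

lemma linkPow_zero_sum (q zm zp : ℝ) (K : ℕ) (X : Conf q zm zp (K + 0))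
    (f : Conf q zm zp K → ℝ) :
    HasSum (fun Y : Conf q zm zp K => linkPow q zm zp K 0 X Y * f Y) (f X) := by
  have h : HasSum (fun Y : Conf q zm zp K => linkPow q zm zp K 0 X Y * f Y)
      (linkPow q zm zp K 0 X X * f X) := by
    refine hasSum_single X fun Y hY => ?_
    unfold linkPow
    rw [if_neg (Ne.symm hY), zero_mul]
  refine hasSum_conv h (fun _ => rfl) ?_
  unfold linkPow
  rw [if_pos rfl, one_mul]

lemma linkPow_sum (q zm zp : ℝ) (hq0 : 0 < q) (hq1 : q < 1) (hzm : zm < 0) (hzp : 0 < zp)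
    (K : ℕ) : ∀ (d : ℕ) (X : Conf q zm zp (K + d)), HasSum (linkPow q zm zp K d X) 1 := by
  intro d
  induction d with
  | zero =>
    intro X
    simpa using linkPow_zero_sum q zm zp K X (fun _ => 1)
  | succ d ih =>
    intro X
    have h := qlink_sum q zm zp hq0 hq1 hzm hzp (K+d) X
    have := swap_sum (qlink q zm zp (K+d) X) (linkPow q zm zp K d) (fun _ => 1) (fun _ => 1) 1 1
      (qlink_nonneg q zm zp hq0 hq1 _ X) (linkPow_nonneg q zm zp hq0 hq1 K d) h.summable ih
      (by simp) (by simpa using ih) (by simpa using h)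
    refine hasSum_conv this (fun Y => ?_) rfl
    rw [mul_one]
    rfl

lemma linkPow_schur (q zm zp : ℝ) (hq0 : 0 < q) (hq1 : q < 1) (hzm : zm < 0) (hzp : 0 < zp)
    (K : ℕ) (ν : Fin K → ℤ) (hmono : Antitone ν) (hpos : ∀ i, 0 ≤ ν i) :
    ∀ (d : ℕ) (X : Conf q zm zp (K + d)),
      HasSum (fun Y : Conf q zm zp K => linkPow q zm zp K d X Y * schurTilde q K ν Y.1)
        (schurTilde q (K + d) (padSig K (K + d) ν) X.1) := by
  intro d
  induction d with
  | zero =>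
    intro X
    have h := linkPow_zero_sum q zm zp K X (fun Y => schurTilde q K ν Y.1)
    have e : padSig K (K + 0) ν = ν := by
      funext i
      unfold padSig
      rw [dif_pos (show (i:ℕ) < K from i.2)]
      rfl
    rw [e]
    exact h
  | succ d ih =>
    intro X
    obtain ⟨M, hM⟩ : ∃ M, ∀ i, |X.1 i| ≤ M :=
      ⟨∑ i, |X.1 i|, fun i => Finset.single_le_sum (f := fun i => |X.1 i|)
        (fun i _ => abs_nonneg _) (Finset.mem_univ i)⟩
    obtain ⟨C, hC⟩ := schurTilde_bdd q zm zp hq0 hq1 hzm hzp M K ν hmono hpos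
    have h := qlink_sum q zm zp hq0 hq1 hzm hzp (K+d) X
    have hs := one_step q zm zp hq0 hq1 hzm hzp (K+d) X (padSig K (K+d) ν)
      (padSig K (K+(d+1)) ν)
      (fun i => by unfold padSig; split_ifs; exacts [hpos _, le_rfl])
      (fun i => by simp [padSig])
      (by simp [padSig])
    have := swap_sum (qlink q zm zp (K+d) X) (linkPow q zm zp K d)
      (fun Y => schurTilde q K ν Y.1) _ _ C
      (qlink_nonneg q zm zp hq0 hq1 _ X) (linkPow_nonneg q zm zp hq0 hq1 K d) h.summable
      (linkPow_sum q zm zp hq0 hq1 hzm hzp K d)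
      (fun Z Y hZ => hC Y (linkPow_supp q zm zp K M d Z Y (right_ne_zero_of_mul hZ)
        (qlink_supp q zm zp (K+d) M X Z (left_ne_zero_of_mul hZ) hM)))
      ih hs
    exact this

/-- Proposition 2.6(i): for N = K + d > K and X ∈ 𝔾_N fixed,
Σ_{Y ∈ 𝔾_K} Λ^N_K(X,Y) S̃_{ν|K}(Y) = S̃_{ν|N}(X) for all partitions ν ∈ 𝕐(K),
the series converging absolutely. -/
theorem link_schur_relation (q zm zp : ℝ) (hq0 : 0 < q) (hq1 : q < 1) (hzm : zm < 0)
    (hzp : 0 < zp) (K d : ℕ) (hK : 1 ≤ K) (hd : 1 ≤ d) (X : Conf q zm zp (K + d))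
    (ν : Fin K → ℤ) (hmono : Antitone ν) (hpos : ∀ i, 0 ≤ ν i) :
    Summable (fun Y : Conf q zm zp K =>
      |linkPow q zm zp K d X Y * schurTilde q K ν Y.1|) ∧
    ∑' Y : Conf q zm zp K, linkPow q zm zp K d X Y * schurTilde q K ν Y.1
      = schurTilde q (K + d) (padSig K (K + d) ν) X.1 := by
  have h := linkPow_schur q zm zp hq0 hq1 hzm hzp K ν hmono hpos d X
  exact ⟨h.summable.abs, h.tsum_eq⟩
end
end

section
/- If (a,b) is an admissible pair of nonzero complex numbers, then for every x ∈ Λ the quantity (ax;q)_∞ · (bx;q)_∞ is a real and strictly positive number. -/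
open scoped BigOperators
open Classical

noncomputable section

/-- finite q-Pochhammer symbol (a;q)_n in ℂ. -/
def qpochC (a : ℂ) (q : ℝ) (n : ℕ) : ℂ := ∏ m ∈ Finset.range n, (1 - a * (q : ℂ) ^ m)

/-- infinite q-Pochhammer symbol (a;q)_∞ in ℂ. -/
def qpochInf (a : ℂ) (q : ℝ) : ℂ := ∏' m : ℕ, (1 - a * (q : ℂ) ^ m)

/-- theta function θ_q(u) = (u;q)_∞ (q/u;q)_∞. -/
def thetaQ (q : ℝ) (u : ℂ) : ℂ := qpochInf u q * qpochInf ((q : ℂ) / u) q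

/-- admissible pair of parameters. -/
def AdmissiblePair (q zm zp : ℝ) (a b : ℂ) : Prop :=
  a ≠ 0 ∧ b ≠ 0 ∧
    ((a.im ≠ 0 ∧ b = (starRingEnd ℂ) a) ∨
     (a.im = 0 ∧ b.im = 0 ∧
       ∃ s t : ℝ, s ∈ Lambda q zm zp ∧ t ∈ Lambda q zm zp ∧ s < t ∧
         (∀ u ∈ Lambda q zm zp, ¬ (s < u ∧ u < t)) ∧
         a⁻¹.re ∈ Set.Ioo s t ∧ b⁻¹.re ∈ Set.Ioo s t))

/-- admissible nondegenerate quadruple: (α,β), (γ,δ) admissible pairs and γδq > αβ. -/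
def AdmissibleNondeg (q zm zp : ℝ) (al be ga de : ℂ) : Prop :=
  AdmissiblePair q zm zp al be ∧ AdmissiblePair q zm zp ga de ∧
    (al * be).re < (ga * de).re * q

/-- the weight w(x; a,b,c,d) = |x| (ax;q)_∞(bx;q)_∞ / ((cx;q)_∞(dx;q)_∞). -/
def weightC (q : ℝ) (a b c d : ℂ) (x : ℝ) : ℂ :=
  (|x| : ℝ) * (qpochInf (a * x) q * qpochInf (b * x) q) /
    (qpochInf (c * x) q * qpochInf (d * x) q)

/-- pseudo big q-Jacobi polynomial P_n(x; a,b,c,d). -/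
def pbqJ (q : ℝ) (a b c d : ℂ) (n : ℕ) (x : ℂ) : ℂ :=
  ∑ k ∈ Finset.range (n + 1),
    qpochC ((q : ℂ) ^ (-(n : ℤ))) q k * qpochC (c * d * (q : ℂ) ^ ((n : ℤ) + 1) / (a * b)) q k *
        qpochC (c * x) q k /
      (qpochC (c * (q : ℂ) / b) q k * qpochC (c * (q : ℂ) / a) q k * qpochC (q : ℂ) q k) *
      (q : ℂ) ^ k

/-- leading coefficient k_n(a,b,c,d) of P_n. -/
def kCoeff (q : ℝ) (a b c d : ℂ) (n : ℕ) : ℂ :=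
  c ^ n * qpochC (c * d * (q : ℂ) ^ ((n : ℤ) + 1) / (a * b)) q n /
    (qpochC (c * (q : ℂ) / b) q n * qpochC (c * (q : ℂ) / a) q n)

/-- the q-hypergeometric series ₂φ₁(A,B;C;q,Z). -/
def phi21 (q : ℝ) (A B C Z : ℂ) : ℂ :=
  ∑' m : ℕ, qpochC A q m * qpochC B q m / (qpochC C q m * qpochC (q : ℂ) q m) * Z ^ m

/-- principal branch square root. -/
def csqrt (z : ℂ) : ℂ := z ^ (1 / 2 : ℂ)



lemma Lambda_mul_pow {q zm zp : ℝ} (hq0 : 0 < q) {x : ℝ} (hx : x ∈ Lambda q zm zp) (m : ℕ) :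
    x * q ^ m ∈ Lambda q zm zp := by
  rcases hx with ⟨k, rfl⟩ | ⟨k, rfl⟩
  · exact Or.inl ⟨k + m, by rw [zpow_add₀ hq0.ne', zpow_natCast, mul_assoc]⟩
  · exact Or.inr ⟨k + m, by rw [zpow_add₀ hq0.ne', zpow_natCast, mul_assoc]⟩

lemma exists_small {q zp : ℝ} (hq0 : 0 < q) (hq1 : q < 1) (hzp : 0 < zp) {t : ℝ} (ht : 0 < t) :
    ∃ n : ℕ, zp * q ^ n < t := by
  obtain ⟨n, hn⟩ := exists_pow_lt_of_lt_one (div_pos ht hzp) hq1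
  exact ⟨n, by rw [lt_div_iff₀ hzp] at hn; linarith⟩

/-- Each pair of factors is a positive real number. -/
lemma factor_pos {q zm zp : ℝ} (hq0 : 0 < q) (hq1 : q < 1)
    (hzp : 0 < zp) {a b : ℂ} (hab : AdmissiblePair q zm zp a b)
    {y : ℝ} (hy : y ∈ Lambda q zm zp) :
    ∃ r : ℝ, 0 < r ∧ (1 - a * y) * (1 - b * y) = (r : ℂ) := by
  obtain ⟨ha, hb, ⟨him, rfl⟩ | ⟨hai, hbi, s, t, hs, ht, hst, hn, hA, hB⟩⟩ := hab
  · by_cases hy0 : y = 0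
    · exact ⟨1, one_pos, by simp [hy0]⟩
    refine ⟨Complex.normSq (1 - a * y), ?_, ?_⟩
    · rw [Complex.normSq_pos]
      intro h
      have := congrArg Complex.im h
      simp [him, hy0] at this
    · rw [← Complex.mul_conj]
      simp
  · obtain ⟨A, rfl⟩ : ∃ A : ℝ, a = A := ⟨a.re, Complex.ext rfl (by simpa using hai)⟩
    obtain ⟨B, rfl⟩ : ∃ B : ℝ, b = B := ⟨b.re, Complex.ext rfl (by simpa using hbi)⟩
    rw [← Complex.ofReal_inv, Complex.ofReal_re] at hA hB
    have hA0 : A ≠ 0 := by exact_mod_cast ha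
    have hB0 : B ≠ 0 := by exact_mod_cast hb
    refine ⟨(1 - A * y) * (1 - B * y), ?_, by push_cast; ring⟩
    have hAB : 0 < A⁻¹ * B⁻¹ := by
      rcases le_or_gt 0 s with h | h
      · exact mul_pos (h.trans_lt hA.1) (h.trans_lt hB.1)
      · rcases le_or_gt t 0 with h' | h'
        · exact mul_pos_of_neg_of_neg (hA.2.trans_le h') (hB.2.trans_le h')
        · obtain ⟨n, hn'⟩ := exists_small hq0 hq1 hzp h'
          exact absurd ⟨h.trans (by positivity), hn'⟩
            (hn (zp * q ^ n) (Or.inr ⟨n, by rw [zpow_natCast]⟩))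
    have h2 : 0 < (A⁻¹ - y) * (B⁻¹ - y) := by
      rcases le_or_gt y s with h | h
      · exact mul_pos (by linarith [hA.1]) (by linarith [hB.1])
      · have h' : t ≤ y := by
          by_contra h'
          exact hn y hy ⟨h, not_le.1 h'⟩
        exact mul_pos_of_neg_of_neg (by linarith [hA.2]) (by linarith [hB.2])
    have h3 : 0 < A * B := by
      rw [← mul_inv] at hAB
      exact inv_pos.1 hAB
    have : (1 - A * y) * (1 - B * y) = A * B * ((A⁻¹ - y) * (B⁻¹ - y)) := by
      field_simp
    rw [this]
    exact mul_pos h3 h2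

lemma summable_factor {q : ℝ} (hq0 : 0 < q) (hq1 : q < 1) (c : ℂ) :
    Summable fun m : ℕ => ‖-(c * (q : ℂ) ^ m)‖ := by
  have : (fun m : ℕ => ‖-(c * (q : ℂ) ^ m)‖) = fun m : ℕ => ‖c‖ * q ^ m := by
    funext m
    simp [abs_of_pos hq0]
  rw [this]
  exact (summable_geometric_of_lt_one hq0.le hq1).mul_left _

/-- For an admissible pair (a,b) and any x ∈ Λ, the quantity (ax;q)_∞ (bx;q)_∞ is real
and strictly positive. -/
theorem admissible_pair_positive (q zm zp : ℝ) (hq0 : 0 < q) (hq1 : q < 1) (hzm : zm < 0)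
    (hzp : 0 < zp) (a b : ℂ) (hab : AdmissiblePair q zm zp a b)
    (x : ℝ) (hx : x ∈ Lambda q zm zp) :
    ∃ r : ℝ, 0 < r ∧ qpochInf (a * x) q * qpochInf (b * x) q = (r : ℂ) := by
  have key : ∀ m : ℕ, ∃ r : ℝ, 0 < r ∧
      (1 - a * x * (q : ℂ) ^ m) * (1 - b * x * (q : ℂ) ^ m) = (r : ℂ) := by
    intro m
    obtain ⟨r, hr, h⟩ := factor_pos hq0 hq1 hzp hab (Lambda_mul_pow hq0 hx m)
    refine ⟨r, hr, ?_⟩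
    rw [← h]
    push_cast
    ring
  have hmul : ∀ c : ℂ, Multipliable fun m : ℕ => 1 - c * (q : ℂ) ^ m := by
    intro c
    simpa [sub_eq_add_neg] using multipliable_one_add_of_summable (summable_factor hq0 hq1 c)
  have hne : ∀ c : ℂ, (∀ m : ℕ, 1 - c * (q : ℂ) ^ m ≠ 0) → qpochInf c q ≠ 0 := by
    intro c hc
    have := tprod_one_add_ne_zero_of_summable (f := fun m : ℕ => -(c * (q : ℂ) ^ m))
      (by simpa [sub_eq_add_neg] using hc) (summable_factor hq0 hq1 c)
    simpa [qpochInf, sub_eq_add_neg] using this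
  have hF : ∀ m : ℕ, (1 - a * x * (q : ℂ) ^ m) * (1 - b * x * (q : ℂ) ^ m) ≠ 0 := by
    intro m
    obtain ⟨r, hr, h⟩ := key m
    rw [h]
    exact_mod_cast hr.ne'
  have hP0 : qpochInf (a * x) q * qpochInf (b * x) q ≠ 0 :=
    mul_ne_zero (hne _ fun m => left_ne_zero_of_mul (hF m))
      (hne _ fun m => right_ne_zero_of_mul (hF m))
  have hprod : HasProd (fun m : ℕ => (1 - a * x * (q : ℂ) ^ m) * (1 - b * x * (q : ℂ) ^ m))
      (qpochInf (a * x) q * qpochInf (b * x) q) :=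
    (hmul (a * x)).hasProd.mul (hmul (b * x)).hasProd
  refine ⟨‖qpochInf (a * x) q * qpochInf (b * x) q‖, norm_pos_iff.2 hP0, ?_⟩
  refine hprod.unique ?_
  have h2 := hprod.norm.map Complex.ofRealHom Complex.continuous_ofReal
  refine h2.congr_fun ?_
  intro m
  obtain ⟨r, hr, h⟩ := key m
  simp only [Function.comp, h]
  simp [abs_of_pos hr]

end
end

section
/- Let (α,β,γ,δ) be an admissible and nondegenerate quadruple. Then for every N ≥ 1 and every integer i with 0 ≤ i ≤ 2N−2, the sum Σ_{x ∈ Λ} w_N(x) |x|^i is finite. Consequently the normalizing constant Z_N = Σ_{X ∈ 𝔾_N} ∏_{i=1}^N w_N(x_i) · ∏_{1≤i<j≤N}(x_j − x_i)² is finite, so that M_N is a well-defined probability measure on 𝔾_N. -/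
open scoped BigOperators
open Classical

noncomputable section

/-- the weight w_N of the q-zw-measure, with parameters (α,β,γq^{1−N},δq^{1−N}). -/
def wN (q : ℝ) (al be ga de : ℂ) (N : ℕ) (x : ℝ) : ℂ :=
  weightC q al be (ga * (q : ℂ) ^ (1 - (N : ℤ))) (de * (q : ℂ) ^ (1 - (N : ℤ))) x

/-- unnormalized q-zw-weight of a configuration: ∏ w_N(xᵢ) ∏_{i<j}(x_j−x_i)². -/
def zwUnnorm (q zm zp : ℝ) (al be ga de : ℂ) (N : ℕ) (X : Conf q zm zp N) : ℝ :=
  (∏ i, (wN q al be ga de N (X.1 i)).re) *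
    ∏ p ∈ Finset.univ.filter (fun p : Fin N × Fin N => p.1 < p.2), (X.1 p.2 - X.1 p.1) ^ 2

/-- normalizing constant Z_N. -/
def ZN (q zm zp : ℝ) (al be ga de : ℂ) (N : ℕ) : ℝ :=
  ∑' X : Conf q zm zp N, zwUnnorm q zm zp al be ga de N X

/-- the q-zw-measure M_N on 𝔾_N. -/
def zwM (q zm zp : ℝ) (al be ga de : ℂ) (N : ℕ) (X : Conf q zm zp N) : ℝ :=
  zwUnnorm q zm zp al be ga de N X / ZN q zm zp al be ga de N


theorem zwaux_Lambda_mul {q zm zp x : ℝ} (hq0 : 0 < q) (hx : x ∈ Lambda q zm zp) (k : ℤ) :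
    x * q ^ k ∈ Lambda q zm zp := by
  rcases hx with ⟨m, rfl⟩ | ⟨m, rfl⟩
  · exact Or.inl ⟨m + k, by rw [zpow_add₀ hq0.ne', mul_assoc]⟩
  · exact Or.inr ⟨m + k, by rw [zpow_add₀ hq0.ne', mul_assoc]⟩

theorem zwaux_pair {q zm zp : ℝ} (hq0 : 0 < q) (hq1 : q < 1) (hzm : zm < 0) (hzp : 0 < zp)
    {a b : ℂ} (h : AdmissiblePair q zm zp a b) :
    ∃ s p : ℝ, a + b = (s : ℂ) ∧ a * b = (p : ℂ) ∧ 0 < p ∧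
      ∀ y ∈ Lambda q zm zp, 0 < 1 - s * y + p * y ^ 2 := by
  obtain ⟨ha, hb, h⟩ := h
  rcases h with ⟨him, rfl⟩ | ⟨hai, hbi, s, t, hs, ht, hst, hgap, haI, hbI⟩
  · refine ⟨2 * a.re, Complex.normSq a, ?_, ?_, Complex.normSq_pos.mpr ha, ?_⟩
    · rw [Complex.add_conj]
    · rw [Complex.mul_conj]
    · intro y hy
      have hy0 : y ≠ 0 := by
        rcases hy with ⟨m, rfl⟩ | ⟨m, rfl⟩
        · exact mul_ne_zero hzm.ne (zpow_pos hq0 m).ne'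
        · exact mul_ne_zero hzp.ne' (zpow_pos hq0 m).ne'
      rw [Complex.normSq_apply]
      have h1 : 0 < (a.im * y) ^ 2 := by positivity
      nlinarith [sq_nonneg (1 - a.re * y)]
  · obtain ⟨A, rfl⟩ : ∃ A : ℝ, a = (A : ℂ) := ⟨a.re, by apply Complex.ext <;> simp [hai]⟩
    obtain ⟨B, rfl⟩ : ∃ B : ℝ, b = (B : ℂ) := ⟨b.re, by apply Complex.ext <;> simp [hbi]⟩
    have hA : A ≠ 0 := by exact_mod_cast ha
    have hB : B ≠ 0 := by exact_mod_cast hb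
    rw [← Complex.ofReal_inv, Complex.ofReal_re] at haI hbI
    obtain ⟨ha1, ha2⟩ := haI
    obtain ⟨hb1, hb2⟩ := hbI
    have hsgn : t ≤ 0 ∨ 0 ≤ s := by
      by_contra! hc
      obtain ⟨ht0, hs0⟩ := hc
      rcases ht with ⟨m, rfl⟩ | ⟨m, rfl⟩
      · nlinarith [zpow_pos hq0 m]
      · apply hgap (zp * q ^ (m + 1)) (Or.inr ⟨m + 1, rfl⟩)
        have h2 : q ^ (m + 1) = q ^ m * q := by rw [zpow_add₀ hq0.ne', zpow_one]
        have h3 := zpow_pos hq0 m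
        constructor
        · have : 0 < zp * q ^ (m + 1) := by positivity
          linarith
        · rw [h2, ← mul_assoc]
          nlinarith
    have hABi : 0 < A⁻¹ * B⁻¹ := by
      rcases hsgn with h0 | h0
      · exact mul_pos_of_neg_of_neg (by linarith) (by linarith)
      · exact mul_pos (by linarith) (by linarith)
    have hAB : 0 < A * B := by
      have := inv_pos.mpr hABi
      simpa [mul_comm] using this
    refine ⟨A + B, A * B, by push_cast; rfl, by push_cast; rfl, hAB, ?_⟩
    intro y hy
    have h1 : 1 - (A + B) * y + A * B * y ^ 2 = A * B * ((A⁻¹ - y) * (B⁻¹ - y)) := by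
      field_simp
      ring
    rw [h1]
    apply mul_pos hAB
    by_cases hys : s < y
    · have hyt : t ≤ y := by
        by_contra! hc
        exact hgap y hy ⟨hys, hc⟩
      exact mul_pos_of_neg_of_neg (by linarith) (by linarith)
    · push Not at hys
      exact mul_pos (by linarith) (by linarith)

/-- Real form of the product of two infinite q-Pochhammer symbols. -/
def zwF (q s p y : ℝ) : ℝ := ∏' m : ℕ, (1 - s * (y * q ^ m) + p * (y * q ^ m) ^ 2)

theorem zwaux_summ {q : ℝ} (hq0 : 0 < q) (hq1 : q < 1) (s p y : ℝ) :
    Summable (fun m : ℕ => - s * (y * q ^ m) + p * (y * q ^ m) ^ 2) := by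
  have h1 := summable_geometric_of_lt_one hq0.le hq1
  have h2 : Summable (fun m : ℕ => (q ^ 2) ^ m) :=
    summable_geometric_of_lt_one (by positivity) (by nlinarith)
  refine ((h1.mul_left (-s * y)).add (h2.mul_left (p * y ^ 2))).congr (fun m => ?_)
  rw [← pow_mul, mul_comm 2 m, pow_mul]
  ring

theorem zwaux_mult {q : ℝ} (hq0 : 0 < q) (hq1 : q < 1) (s p y : ℝ) :
    Multipliable (fun m : ℕ => 1 - s * (y * q ^ m) + p * (y * q ^ m) ^ 2) := by
  refine (Real.multipliable_one_add_of_summable (zwaux_summ hq0 hq1 s p y)).congr (fun m => ?_)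
  ring

theorem zwF_pos {q : ℝ} (hq0 : 0 < q) (hq1 : q < 1) (s p y : ℝ)
    (h : ∀ m : ℕ, 0 < 1 - s * (y * q ^ m) + p * (y * q ^ m) ^ 2) : 0 < zwF q s p y := by
  unfold zwF
  rw [← Real.rexp_tsum_eq_tprod h]
  · exact Real.exp_pos _
  · refine (Real.summable_log_one_add_of_summable (zwaux_summ hq0 hq1 s p y)).congr (fun m => ?_)
    congr 1
    ring

theorem zwF_rec {q : ℝ} (hq0 : 0 < q) (hq1 : q < 1) (s p y : ℝ) :
    zwF q s p y = (1 - s * y + p * y ^ 2) * zwF q s p (y * q) := by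
  unfold zwF
  have e : ∀ m : ℕ, 1 - s * (y * q ^ (m + 1)) + p * (y * q ^ (m + 1)) ^ 2 =
      1 - s * (y * q * q ^ m) + p * (y * q * q ^ m) ^ 2 := fun m => by ring
  rw [tprod_eq_zero_mul']
  · simp only [e]
    simp
  · simp only [e]
    exact zwaux_mult hq0 hq1 s p (y * q)

theorem zwaux_qpoch {q : ℝ} (hq0 : 0 < q) (hq1 : q < 1) {a b : ℂ} {s p : ℝ}
    (hs : a + b = (s : ℂ)) (hp : a * b = (p : ℂ)) (y : ℝ) :
    qpochInf (a * y) q * qpochInf (b * y) q = ((zwF q s p y : ℝ) : ℂ) := by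
  have hm : ∀ c : ℂ, Multipliable (fun m : ℕ => 1 - c * (q : ℂ) ^ m) := by
    intro c
    have h1 : Summable (fun m : ℕ => (q : ℂ) ^ m) := by
      apply summable_geometric_of_norm_lt_one
      rw [Complex.norm_real, Real.norm_eq_abs, abs_of_pos hq0]
      exact hq1
    refine (Complex.multipliable_one_add_of_summable (h1.mul_left (-c))).congr (fun m => ?_)
    ring
  unfold qpochInf zwF
  rw [← Multipliable.tprod_mul (hm _) (hm _)]
  have h := (zwaux_mult hq0 hq1 s p y).map_tprod Complex.ofRealHom Complex.continuous_ofReal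
  simp only [Complex.ofRealHom_eq_coe] at h
  rw [h]
  congr 1
  ext m
  push_cast
  rw [← hs, ← hp]
  ring

/-- Real form of the weight times a power. -/
def zwG (q s p s' p' : ℝ) (k : ℕ) (x : ℝ) : ℝ := |x| ^ k * zwF q s p x / zwF q s' p' x

open Filter Topology in
theorem zwaux_summable_int {q : ℝ} (hq0 : 0 < q) (hq1 : q < 1) {s p s' p' z : ℝ} (hz : z ≠ 0)
    (hp' : 0 < p')
    (h : ∀ m : ℤ, 0 < 1 - s * (z * q ^ m) + p * (z * q ^ m) ^ 2)
    (h' : ∀ m : ℤ, 0 < 1 - s' * (z * q ^ m) + p' * (z * q ^ m) ^ 2)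
    (k : ℕ) (hk : 1 ≤ k) (hpp : p < p' * q ^ k) :
    Summable (fun m : ℤ => zwG q s p s' p' k (z * q ^ m)) := by
  have hF : ∀ m : ℤ, 0 < zwF q s p (z * q ^ m) := fun m => zwF_pos hq0 hq1 _ _ _ (fun j => by
    have := h (m + j)
    rwa [zpow_add₀ hq0.ne', zpow_natCast, ← mul_assoc z] at this)
  have hF' : ∀ m : ℤ, 0 < zwF q s' p' (z * q ^ m) := fun m => zwF_pos hq0 hq1 _ _ _ (fun j => by
    have := h' (m + j)
    rwa [zpow_add₀ hq0.ne', zpow_natCast, ← mul_assoc z] at this)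
  have hx : ∀ m : ℤ, 0 < |z * q ^ m| := fun m =>
    abs_pos.mpr (mul_ne_zero hz (zpow_pos hq0 m).ne')
  have hG : ∀ m : ℤ, 0 < zwG q s p s' p' k (z * q ^ m) := fun m =>
    div_pos (mul_pos (pow_pos (hx m) k) (hF m)) (hF' m)
  have hstep : ∀ m : ℤ, zwG q s p s' p' k (z * q ^ (m + 1)) = zwG q s p s' p' k (z * q ^ m) *
      (q ^ k * ((1 - s' * (z * q ^ m) + p' * (z * q ^ m) ^ 2) /
        (1 - s * (z * q ^ m) + p * (z * q ^ m) ^ 2))) := by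
    intro m
    have e : z * q ^ (m + 1) = z * q ^ m * q := by rw [zpow_add₀ hq0.ne', zpow_one, mul_assoc]
    have f1 := hF (m + 1)
    have f2 := hF' (m + 1)
    have g1 := h m
    have g2 := h' m
    rw [e] at f1 f2 ⊢
    unfold zwG
    rw [zwF_rec hq0 hq1 s p (z * q ^ m), zwF_rec hq0 hq1 s' p' (z * q ^ m), abs_mul,
      abs_of_pos hq0, mul_pow]
    generalize 1 - s * (z * q ^ m) + p * (z * q ^ m) ^ 2 = A at *
    generalize 1 - s' * (z * q ^ m) + p' * (z * q ^ m) ^ 2 = B at *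
    field_simp
  apply Summable.of_nat_of_neg
  · apply summable_of_ratio_test_tendsto_lt_one (l := q ^ k) (pow_lt_one₀ hq0.le hq1 (by omega))
    · exact Eventually.of_forall (fun n => (hG _).ne')
    · have e : ∀ n : ℕ, ‖zwG q s p s' p' k (z * q ^ (((n + 1 : ℕ) : ℤ)))‖ /
          ‖zwG q s p s' p' k (z * q ^ ((n : ℤ)))‖ =
          q ^ k * ((1 - s' * (z * q ^ n) + p' * (z * q ^ n) ^ 2) /
            (1 - s * (z * q ^ n) + p * (z * q ^ n) ^ 2)) := by
        intro n
        rw [Real.norm_of_nonneg (hG _).le, Real.norm_of_nonneg (hG _).le]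
        push_cast
        rw [hstep n, mul_div_assoc, mul_comm, div_mul_cancel₀ _ (hG _).ne']
        simp only [zpow_natCast]
      simp only [e]
      have t0 : Tendsto (fun n : ℕ => z * q ^ n) atTop (𝓝 0) := by
        simpa using (tendsto_pow_atTop_nhds_zero_of_lt_one hq0.le hq1).const_mul z
      have c : ContinuousAt (fun y : ℝ => q ^ k * ((1 - s' * y + p' * y ^ 2) /
          (1 - s * y + p * y ^ 2))) 0 := by
        apply ContinuousAt.mul continuousAt_const
        apply ContinuousAt.div (by fun_prop) (by fun_prop)
        simp
      have := c.tendsto.comp t0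
      simpa [Function.comp_def] using this
  · have hl : p / p' / q ^ k < 1 := by
      rw [div_div, div_lt_one (by positivity)]
      exact hpp
    apply summable_of_ratio_test_tendsto_lt_one hl
    · exact Eventually.of_forall (fun n => (hG _).ne')
    · have e : ∀ n : ℕ, ‖zwG q s p s' p' k (z * q ^ (-((n + 1 : ℕ) : ℤ)))‖ /
          ‖zwG q s p s' p' k (z * q ^ (-(n : ℤ)))‖ =
          (((z⁻¹ * q ^ (n + 1)) ^ 2 - s * (z⁻¹ * q ^ (n + 1)) + p) /
            ((z⁻¹ * q ^ (n + 1)) ^ 2 - s' * (z⁻¹ * q ^ (n + 1)) + p')) / q ^ k := by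
        intro n
        rw [Real.norm_of_nonneg (hG _).le, Real.norm_of_nonneg (hG _).le]
        have e1 : (-(n : ℤ)) = -((n + 1 : ℕ) : ℤ) + 1 := by push_cast; ring
        rw [e1, hstep, ← div_div, div_self (hG _).ne']
        have g1 := h (-((n + 1 : ℕ) : ℤ))
        have g2 := h' (-((n + 1 : ℕ) : ℤ))
        have hy : z⁻¹ * q ^ (n + 1) = (z * q ^ (-((n + 1 : ℕ) : ℤ)))⁻¹ := by
          rw [mul_inv, zpow_neg, inv_inv, zpow_natCast]
        rw [hy]
        have hy0 : z * q ^ (-((n + 1 : ℕ) : ℤ)) ≠ 0 := mul_ne_zero hz (zpow_pos hq0 _).ne'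
        generalize z * q ^ (-((n + 1 : ℕ) : ℤ)) = y at *
        have r1 : y⁻¹ ^ 2 - s * y⁻¹ + p = (1 - s * y + p * y ^ 2) / y ^ 2 := by
          field_simp
        have r2 : y⁻¹ ^ 2 - s' * y⁻¹ + p' = (1 - s' * y + p' * y ^ 2) / y ^ 2 := by
          field_simp
        rw [r1, r2]
        field_simp
      simp only [e]
      have t0 : Tendsto (fun n : ℕ => z⁻¹ * q ^ (n + 1)) atTop (𝓝 0) := by
        have := (tendsto_pow_atTop_nhds_zero_of_lt_one hq0.le hq1).const_mul z⁻¹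
        rw [mul_zero] at this
        exact this.comp (tendsto_add_atTop_nat 1)
      have c : ContinuousAt (fun y : ℝ => ((y ^ 2 - s * y + p) /
          (y ^ 2 - s' * y + p')) / q ^ k) 0 := by
        apply ContinuousAt.div_const
        apply ContinuousAt.div (by fun_prop) (by fun_prop)
        simpa using hp'.ne'
      have := c.tendsto.comp t0
      simpa [Function.comp_def] using this

theorem zwaux_summable_Lambda {q zm zp : ℝ} (f : ℝ → ℝ)
    (h1 : Summable (fun m : ℤ => f (zm * q ^ m))) (h2 : Summable (fun m : ℤ => f (zp * q ^ m))) :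
    Summable (fun x : ↥(Lambda q zm zp) => f x) := by
  let e : ℤ ⊕ ℤ → ℝ := Sum.elim (fun m => zm * q ^ m) (fun m => zp * q ^ m)
  have hs : Summable (fun i => f (e i)) := Summable.sum _ h1 h2
  have hx : ∀ x : ↥(Lambda q zm zp), ∃ i, e i = x := by
    rintro ⟨x, ⟨m, hm⟩ | ⟨m, hm⟩⟩
    · exact ⟨Sum.inl m, hm.symm⟩
    · exact ⟨Sum.inr m, hm.symm⟩
  choose g hg using hx
  have hgi : Function.Injective g := by
    intro x y hxy
    apply Subtype.ext
    rw [← hg x, ← hg y, hxy]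
  refine (hs.comp_injective hgi).congr (fun x => ?_)
  simp [hg]

theorem zwaux_summable_pi {ι : Type*} (u : ι → ℝ) (hu : ∀ x, 0 ≤ u x) (h : Summable u) (N : ℕ) :
    Summable (fun X : Fin N → ι => ∏ i, u (X i)) := by
  induction N with
  | zero => exact Summable.of_finite
  | succ n ih =>
    have h3 := Summable.mul_of_nonneg h ih hu (fun X => Finset.prod_nonneg (fun i _ => hu _))
    rw [← (Fin.consEquiv (fun _ : Fin (n + 1) => ι)).summable_iff]
    refine h3.congr (fun x => ?_)
    simp [Fin.prod_univ_succ, Fin.consEquiv]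

theorem zwaux_vander {N : ℕ} (x : Fin N → ℝ) :
    ∏ p ∈ Finset.univ.filter (fun p : Fin N × Fin N => p.1 < p.2), (x p.2 - x p.1) ^ 2 ≤
      ∏ i, (1 + |x i|) ^ (2 * N - 2) := by
  have h1 : ∏ p ∈ Finset.univ.filter (fun p : Fin N × Fin N => p.1 < p.2), (x p.2 - x p.1) ^ 2 ≤
      ∏ p ∈ Finset.univ.filter (fun p : Fin N × Fin N => p.1 < p.2),
        ((1 + |x p.1|) ^ 2 * (1 + |x p.2|) ^ 2) := by
    apply Finset.prod_le_prod
    · intro p _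
      positivity
    · intro p _
      rw [← mul_pow]
      apply sq_le_sq'
      · have a1 := abs_nonneg (x p.1)
        have a2 := abs_nonneg (x p.2)
        nlinarith [neg_abs_le (x p.2), le_abs_self (x p.1), mul_nonneg a1 a2]
      · have a1 := abs_nonneg (x p.1)
        have a2 := abs_nonneg (x p.2)
        nlinarith [neg_abs_le (x p.1), le_abs_self (x p.2), mul_nonneg a1 a2]
  refine h1.trans (le_of_eq ?_)
  generalize hh : (fun i => (1 + |x i|) ^ 2) = g
  have hg : ∀ i, (1 + |x i|) ^ 2 = g i := fun i => congrFun hh i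
  have e0 : 2 * N - 2 = 2 * (N - 1) := by omega
  simp only [e0, pow_mul, hg]
  rw [Finset.prod_mul_distrib, Finset.prod_filter, Finset.prod_filter, Fintype.prod_prod_type,
    Fintype.prod_prod_type]
  simp only
  rw [Finset.prod_comm (f := fun i j : Fin N => if i < j then g j else 1),
    ← Finset.prod_mul_distrib]
  apply Finset.prod_congr rfl
  intro i _
  rw [← Finset.prod_mul_distrib]
  have e1 : ∀ j : Fin N, ((if i < j then g i else 1) * if j < i then g i else 1) =
      if j ≠ i then g i else 1 := by
    intro j
    rcases lt_trichotomy i j with hij | hij | hij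
    · simp [hij, hij.ne', hij.not_gt]
    · simp [hij]
    · simp [hij, hij.ne, hij.not_gt]
  simp only [e1]
  rw [← Finset.prod_filter, Finset.prod_const, Finset.filter_ne']
  simp

/-- For an admissible nondegenerate quadruple (α,β,γ,δ) and N ≥ 1, the sums
Σ_{x∈Λ} w_N(x)|x|^i (0 ≤ i ≤ 2N−2) are finite; consequently the normalizing constant
Z_N = Σ_{X∈𝔾_N} ∏ w_N(xᵢ) ∏_{i<j}(x_j−x_i)² is finite (and positive), so the q-zw-measure
M_N is well defined. -/
theorem zw_measure_well_defined (q zm zp : ℝ) (hq0 : 0 < q) (hq1 : q < 1) (hzm : zm < 0)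
    (hzp : 0 < zp) (al be ga de : ℂ) (hadm : AdmissibleNondeg q zm zp al be ga de)
    (N : ℕ) (hN : 1 ≤ N) :
    (∀ i : ℕ, i ≤ 2 * N - 2 →
      Summable (fun x : ↥(Lambda q zm zp) =>
        (wN q al be ga de N (x : ℝ)).re * |(x : ℝ)| ^ i)) ∧
    Summable (fun X : Conf q zm zp N => zwUnnorm q zm zp al be ga de N X) ∧
    0 < ZN q zm zp al be ga de N := by
  obtain ⟨hab, hcd, hnd⟩ := hadm
  obtain ⟨s, p, hs, hp, hp0, hpos⟩ := zwaux_pair hq0 hq1 hzm hzp hab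
  obtain ⟨s₀, p₀, hs₀, hp₀, hp₀0, hpos₀⟩ := zwaux_pair hq0 hq1 hzm hzp hcd
  rw [hp, hp₀, Complex.ofReal_re, Complex.ofReal_re] at hnd
  set c : ℝ := q ^ (1 - (N : ℤ)) with hc
  have hc0 : 0 < c := zpow_pos hq0 _
  have hcC : (q : ℂ) ^ (1 - (N : ℤ)) = (c : ℂ) := by rw [hc]; push_cast; rfl
  have hs' : ga * (c : ℂ) + de * (c : ℂ) = ((s₀ * c : ℝ) : ℂ) := by
    push_cast; rw [← hs₀]; ring
  have hp' : ga * (c : ℂ) * (de * (c : ℂ)) = ((p₀ * c ^ 2 : ℝ) : ℂ) := by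
    push_cast; rw [← hp₀]; ring
  have hpos' : ∀ y ∈ Lambda q zm zp, 0 < 1 - s₀ * c * y + p₀ * c ^ 2 * y ^ 2 := by
    intro y hy
    have := hpos₀ _ (zwaux_Lambda_mul hq0 hy (1 - (N : ℤ)))
    rw [← hc] at this
    calc 0 < _ := this
      _ = _ := by ring
  have hw : ∀ x : ℝ, (wN q al be ga de N x).re = zwG q s p (s₀ * c) (p₀ * c ^ 2) 1 x := by
    intro x
    unfold wN weightC zwG
    rw [hcC, zwaux_qpoch hq0 hq1 hs hp, zwaux_qpoch hq0 hq1 hs' hp', pow_one,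
      ← Complex.ofReal_mul, ← Complex.ofReal_div, Complex.ofReal_re]
  have hwpos : ∀ x ∈ Lambda q zm zp, 0 < (wN q al be ga de N x).re := by
    intro x hx
    rw [hw]
    have hx0 : x ≠ 0 := by
      rcases hx with ⟨m, rfl⟩ | ⟨m, rfl⟩
      · exact mul_ne_zero hzm.ne (zpow_pos hq0 m).ne'
      · exact mul_ne_zero hzp.ne' (zpow_pos hq0 m).ne'
    have hF1 := zwF_pos hq0 hq1 s p x (fun m => by
      have := hpos _ (zwaux_Lambda_mul hq0 hx (m : ℤ))
      rwa [zpow_natCast] at this)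
    have hF2 := zwF_pos hq0 hq1 (s₀ * c) (p₀ * c ^ 2) x (fun m => by
      have := hpos' _ (zwaux_Lambda_mul hq0 hx (m : ℤ))
      rwa [zpow_natCast] at this)
    unfold zwG
    positivity
  have part1 : ∀ i : ℕ, i ≤ 2 * N - 2 →
      Summable (fun x : ↥(Lambda q zm zp) =>
        (wN q al be ga de N (x : ℝ)).re * |(x : ℝ)| ^ i) := by
    intro i hi
    have hpp : p < p₀ * c ^ 2 * q ^ (i + 1) := by
      have h1 : q ≤ c ^ 2 * q ^ (i + 1) := by
        have h2 : c ^ 2 * q ^ (2 * N - 1) = q := by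
          have h3 : ((2 * N - 1 : ℕ) : ℤ) = 2 * (N : ℤ) - 1 := by omega
          rw [hc, ← zpow_natCast q (2 * N - 1), h3, ← zpow_natCast, ← zpow_mul,
            ← zpow_add₀ hq0.ne']
          have h4 : (1 - (N : ℤ)) * ((2 : ℕ) : ℤ) + (2 * (N : ℤ) - 1) = 1 := by push_cast; ring
          rw [h4, zpow_one]
        calc q = c ^ 2 * q ^ (2 * N - 1) := h2.symm
          _ ≤ c ^ 2 * q ^ (i + 1) := by
            apply mul_le_mul_of_nonneg_left _ (by positivity)
            exact pow_le_pow_of_le_one hq0.le hq1.le (by omega)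
      calc p < p₀ * q := hnd
        _ ≤ p₀ * (c ^ 2 * q ^ (i + 1)) := mul_le_mul_of_nonneg_left h1 hp₀0.le
        _ = _ := by ring
    have hp'0 : 0 < p₀ * c ^ 2 := by positivity
    have hsum := zwaux_summable_Lambda (q := q) (zm := zm) (zp := zp)
      (zwG q s p (s₀ * c) (p₀ * c ^ 2) (i + 1))
      (zwaux_summable_int hq0 hq1 hzm.ne hp'0 (fun m => hpos _ (Or.inl ⟨m, rfl⟩))
        (fun m => hpos' _ (Or.inl ⟨m, rfl⟩)) (i + 1) (by omega) hpp)
      (zwaux_summable_int hq0 hq1 hzp.ne' hp'0 (fun m => hpos _ (Or.inr ⟨m, rfl⟩))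
        (fun m => hpos' _ (Or.inr ⟨m, rfl⟩)) (i + 1) (by omega) hpp)
    refine hsum.congr (fun x => ?_)
    rw [hw]
    unfold zwG
    ring
  have hu : Summable (fun x : ↥(Lambda q zm zp) =>
      (wN q al be ga de N (x : ℝ)).re * (1 + |(x : ℝ)|) ^ (2 * N - 2)) := by
    have h1 : Summable (fun x : ↥(Lambda q zm zp) => ∑ i ∈ Finset.range (2 * N - 2 + 1),
        ((2 * N - 2).choose i : ℝ) * ((wN q al be ga de N (x : ℝ)).re * |(x : ℝ)| ^ i)) := by
      apply summable_sum
      intro i hi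
      exact (part1 i (by have := Finset.mem_range.mp hi; omega)).mul_left _
    refine h1.congr (fun x => ?_)
    rw [add_comm (1 : ℝ), add_pow, Finset.mul_sum]
    apply Finset.sum_congr rfl
    intro i _
    ring
  have hnn : ∀ X : Conf q zm zp N, 0 < zwUnnorm q zm zp al be ga de N X := by
    intro X
    unfold zwUnnorm
    apply mul_pos
    · exact Finset.prod_pos (fun i _ => hwpos _ (X.2.2 i))
    · apply Finset.prod_pos
      intro p hp
      have hlt : p.1 < p.2 := (Finset.mem_filter.mp hp).2
      have := X.2.1 hlt
      exact pow_pos (by linarith) 2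
  have part2 : Summable (fun X : Conf q zm zp N => zwUnnorm q zm zp al be ga de N X) := by
    have h1 := zwaux_summable_pi _ (fun x : ↥(Lambda q zm zp) =>
      mul_nonneg (hwpos x x.2).le (by positivity)) hu N
    let φ : Conf q zm zp N → (Fin N → ↥(Lambda q zm zp)) := fun X i => ⟨X.1 i, X.2.2 i⟩
    have hφ : Function.Injective φ := by
      intro X Y hXY
      apply Subtype.ext
      funext i
      exact congrArg Subtype.val (congrFun hXY i)
    refine Summable.of_nonneg_of_le (fun X => (hnn X).le) (fun X => ?_) (h1.comp_injective hφ)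
    simp only [Function.comp, φ]
    rw [Finset.prod_mul_distrib]
    unfold zwUnnorm
    exact mul_le_mul_of_nonneg_left (zwaux_vander X.1)
      (Finset.prod_nonneg (fun i _ => (hwpos _ (X.2.2 i)).le))
  refine ⟨part1, part2, ?_⟩
  let X₀ : Conf q zm zp N := ⟨fun i => zp * q ^ (-((i : ℕ) : ℤ)), by
    intro i j hij
    have hij' : (i : ℕ) < (j : ℕ) := hij
    apply mul_lt_mul_of_pos_left _ hzp
    exact zpow_lt_zpow_right_of_lt_one₀ hq0 hq1 (by omega), fun i => Or.inr ⟨_, rfl⟩⟩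
  exact part2.tsum_pos (fun X => (hnn X).le) X₀ (hnn X₀)

end
end
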